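/- arXiv:2005.11956 — 2 statements merged into one kernel-verified Lean document; each statement's English description precedes it below -/
import Mathlib

section
/- Let p_1,…,p_m ≥ 2 and G = C_{p_1} * ⋯ * C_{p_m}, and let g ∈ G be a nontrivial element of finite order k. Then the expected number of fixed points of φ(g) under a uniformly random homomorphism φ : G → S_n satisfies 𝔼_n^Hom[ Z_g ] ∼ n^{1/k} as n → ∞. -/
open Filter Topology Asymptotics
open scoped TensorProduct

/-- the relations `x_i ^ p_i = 1` defining `C_{p_1} * ⋯ * C_{p_m}` -/
def cyclicRels (m : ℕ) (p : Fin m → ℕ) : Set (FreeGroup (Fin m)) :=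
  {w : FreeGroup (Fin m) | ∃ i : Fin m, w = FreeGroup.of i ^ p i}

/-- the free product `C_{p_1} * ⋯ * C_{p_m}` of cyclic groups of orders `p_1, …, p_m`,
presented as `⟨x_1,…,x_m ∣ x_1^{p_1} = ⋯ = x_m^{p_m} = 1⟩`. -/
abbrev CyclicFreeProduct (m : ℕ) (p : Fin m → ℕ) : Type :=
  PresentedGroup (cyclicRels m p)

/-- the number of fixed points of the permutation `φ g` on `{1,…,n}` -/
noncomputable def homFixCount {G : Type*} [Group G] {n : ℕ} (g : G)
    (φ : G →* Equiv.Perm (Fin n)) : ℕ :=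
  Nat.card {x : Fin n // φ g x = x}

/-- the expectation of `f` over a uniformly random homomorphism `G → S_n` -/
noncomputable def homExp (G : Type*) [Group G] (n : ℕ)
    (f : (G →* Equiv.Perm (Fin n)) → ℝ) : ℝ :=
  (∑' φ : G →* Equiv.Perm (Fin n), f φ) /
    (Nat.card (G →* Equiv.Perm (Fin n)) : ℝ)


noncomputable def expoF (D : Finset ℕ) (r : ℝ) (m : ℤ) (θ : ℝ) : ℂ :=
  Complex.exp ((∑ e ∈ D, ((r:ℂ) ^ e / e) * Complex.exp (e * (θ * Complex.I))) - m * (θ * Complex.I))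

noncomputable def Jint (D : Finset ℕ) (r : ℝ) (m : ℤ) : ℂ :=
  ∫ θ in (0:ℝ)..(2 * Real.pi), expoF D r m θ

lemma expoF_continuous (D : Finset ℕ) (r : ℝ) (m : ℤ) : Continuous (expoF D r m) := by
  unfold expoF; fun_prop

lemma expoF_periodic (D : Finset ℕ) (r : ℝ) (m : ℤ) : Function.Periodic (expoF D r m) (2 * Real.pi) := by
  intro θ
  unfold expoF
  have h1 : ∀ e : ℕ, Complex.exp (e * (((θ + 2 * Real.pi : ℝ) : ℂ) * Complex.I))
      = Complex.exp (e * (θ * Complex.I)) := by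
    intro e
    have := Complex.exp_periodic.nat_mul e (e * (θ * Complex.I))
    rw [← this]; congr 1; push_cast; ring
  simp only [h1]
  have := Complex.exp_periodic.int_mul (-m) ((∑ e ∈ D, ((r:ℂ) ^ e / e) * Complex.exp (e * (θ * Complex.I))) - m * (θ * Complex.I))
  rw [← this]; congr 1; push_cast; ring

lemma expoF_shift (D : Finset ℕ) (r : ℝ) (m : ℤ) (e : ℕ) (θ : ℝ) :
    Complex.exp (e * (θ * Complex.I)) * expoF D r m θ = expoF D r (m - e) θ := by
  unfold expoF
  rw [← Complex.exp_add]; congr 1; push_cast; ring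

lemma J_rec (D : Finset ℕ) (hD : 0 ∉ D) (r : ℝ) (m : ℤ) :
    (m:ℂ) * Jint D r m = ∑ e ∈ D, (r:ℂ) ^ e * Jint D r (m - e) := by
  have hder : ∀ θ : ℝ, HasDerivAt (expoF D r m)
      (Complex.I * ((∑ e ∈ D, (r:ℂ)^e * expoF D r (m - e) θ) - m * expoF D r m θ)) θ := by
    intro θ
    have h0 : HasDerivAt (fun x : ℝ => (x:ℂ) * Complex.I) Complex.I θ := by
      simpa using (Complex.ofRealCLM.hasDerivAt (x := θ)).mul_const Complex.I
    have h1 : ∀ e ∈ D, HasDerivAt (fun x : ℝ => ((r:ℂ) ^ e / e) * Complex.exp (e * (x * Complex.I)))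
        (((r:ℂ) ^ e / e) * (Complex.exp (e * (θ * Complex.I)) * (e * Complex.I))) θ := by
      intro e _
      exact ((h0.const_mul (e:ℂ)).cexp).const_mul _
    have h2 := ((HasDerivAt.fun_sum h1).fun_sub (h0.const_mul (m:ℂ))).cexp
    refine h2.congr_deriv ?_
    have hs : ∀ e ∈ D, (r:ℂ)^e * expoF D r (m - e) θ
        = expoF D r m θ * ((r:ℂ)^e * Complex.exp (e * (θ * Complex.I))) := by
      intro e _
      rw [← expoF_shift]; ring
    rw [Finset.sum_congr rfl hs, ← Finset.mul_sum]
    have hs2 : ∀ e ∈ D, ((r:ℂ) ^ e / e) * (Complex.exp (e * (θ * Complex.I)) * (e * Complex.I))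
        = Complex.I * ((r:ℂ)^e * Complex.exp (e * (θ * Complex.I))) := by
      intro e he
      have : (e:ℂ) ≠ 0 := by
        have : e ≠ 0 := fun h => hD (h ▸ he)
        exact_mod_cast this
      field_simp
    rw [Finset.sum_congr rfl hs2, ← Finset.mul_sum]
    unfold expoF
    ring
  have hc : ∀ m' : ℤ, IntervalIntegrable (expoF D r m') MeasureTheory.volume 0 (2 * Real.pi) :=
    fun m' => (expoF_continuous D r m').intervalIntegrable _ _
  have := intervalIntegral.integral_eq_sub_of_hasDerivAt (a := 0) (b := 2 * Real.pi)
    (fun θ _ => hder θ) (by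
      apply Continuous.intervalIntegrable
      have := expoF_continuous D r
      fun_prop)
  have hp : expoF D r m (2 * Real.pi) = expoF D r m 0 := by
    simpa using expoF_periodic D r m 0
  rw [hp, sub_self, intervalIntegral.integral_const_mul, intervalIntegral.integral_sub,
    intervalIntegral.integral_finsetSum] at this
  · simp only [intervalIntegral.integral_const_mul] at this
    rcases mul_eq_zero.mp this with h | h
    · exact absurd h Complex.I_ne_zero
    · unfold Jint
      exact (sub_eq_zero.mp h).symm
  · intro e _
    exact (hc _).const_mul _
  · apply Continuous.intervalIntegrable
    have := expoF_continuous D r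
    fun_prop
  · exact (hc _).const_mul _

lemma J_neg (D : Finset ℕ) (hD : 0 ∉ D) (r : ℝ) (j : ℕ) :
    (r:ℂ)^j * Jint D r (-(j:ℤ)) = if j = 0 then 2 * Real.pi else 0 := by
  let f : ℂ → ℂ := fun z => Complex.exp (∑ e ∈ D, z ^ e / e) * z ^ j
  have hf : Differentiable ℂ f := by
    intro z; dsimp only [f]; fun_prop
  have h := (hf.diffContOnCl (s := Metric.ball 0 |r|)).circleAverage
  rw [Real.circleAverage_def] at h
  have h2 : ∀ θ : ℝ, f (circleMap 0 r θ) = (r:ℂ)^j * expoF D r (-(j:ℤ)) θ := by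
    intro θ
    simp only [f, expoF, circleMap, zero_add, mul_pow]
    rw [mul_left_comm, ← Complex.exp_nat_mul, ← Complex.exp_add]
    congr 2
    push_cast
    simp only [← Complex.exp_nat_mul, neg_mul, sub_neg_eq_add]
    congr 1
    apply Finset.sum_congr rfl
    intro e _; ring
  simp only [h2, intervalIntegral.integral_const_mul] at h
  have h3 : f 0 = if j = 0 then 1 else 0 := by
    simp only [f]
    have : ∑ e ∈ D, (0:ℂ) ^ e / e = 0 := by
      apply Finset.sum_eq_zero
      intro e he
      have : e ≠ 0 := fun h => hD (h ▸ he)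
      simp [this]
    rw [this]; simp [zero_pow_eq]
  rw [h3] at h
  unfold Jint
  have hpi : (2 * Real.pi : ℂ) ≠ 0 := by simp [Real.pi_ne_zero]
  rw [Complex.real_smul] at h
  push_cast at h
  rw [inv_mul_eq_iff_eq_mul₀ hpi] at h
  rw [h]; split_ifs <;> simp

lemma J_eq (D : Finset ℕ) (hD : 0 ∉ D) (r : ℝ) (hr : 0 < r) (c : ℕ → ℝ) (hc0 : c 0 = 1)
    (hc : ∀ n : ℕ, 0 < n → (n:ℝ) * c n = ∑ e ∈ D, if e ≤ n then c (n - e) else 0) (n : ℕ) :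
    Jint D r n = 2 * Real.pi * c n * (r:ℂ)^n := by
  have hneg : ∀ j : ℕ, 0 < j → Jint D r (-(j:ℤ)) = 0 := by
    intro j hj
    have := J_neg D hD r j
    rw [if_neg hj.ne'] at this
    rcases mul_eq_zero.mp this with h | h
    · have := pow_eq_zero_iff (hj.ne') |>.mp h
      exact absurd (by exact_mod_cast this) hr.ne'
    · exact h
  induction n using Nat.strong_induction_on with
  | _ n ih =>
    rcases Nat.eq_zero_or_pos n with rfl | hn
    · have := J_neg D hD r 0
      simpa [hc0] using this
    · have hn' : (n:ℂ) ≠ 0 := by exact_mod_cast hn.ne'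
      apply mul_left_cancel₀ hn'
      have := J_rec D hD r n
      push_cast at this
      rw [this]
      have h2 : (n:ℂ) * (c n) = ∑ e ∈ D, if e ≤ n then (c (n - e) : ℂ) else 0 := by
        have := congrArg (fun x : ℝ => (x:ℂ)) (hc n hn)
        push_cast [apply_ite] at this
        rw [this]
      calc _ = ∑ e ∈ D, (2 * Real.pi * (r:ℂ)^n) * (if e ≤ n then (c (n - e) : ℂ) else 0) := by
            apply Finset.sum_congr rfl
            intro e he
            have he0 : e ≠ 0 := fun h => hD (h ▸ he)
            split_ifs with hle
            · rw [← Nat.cast_sub hle, ih (n - e) (by omega)]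
              have : (r:ℂ)^n = r^e * r^(n-e) := by rw [← pow_add]; congr 1; omega
              rw [this]; ring
            · have : (n:ℤ) - e = -((e - n : ℕ):ℤ) := by omega
              rw [this, hneg _ (by omega)]; simp
        _ = _ := by rw [← Finset.mul_sum, ← h2]; ring

noncomputable def Hfun (p j : ℕ) (r θ : ℝ) : ℂ :=
  Complex.exp ((∑ e ∈ p.divisors, ((r:ℂ) ^ e / e) *
    (Complex.exp (e * (θ * Complex.I)) - 1 - e * (θ * Complex.I))) + j * (θ * Complex.I))

lemma Hfun_continuous (p j : ℕ) (r : ℝ) : Continuous (Hfun p j r) := by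
  unfold Hfun; fun_prop

lemma Hfun_norm (p j : ℕ) (r θ : ℝ) :
    ‖Hfun p j r θ‖ = Real.exp (∑ e ∈ p.divisors, (r ^ e / e) * (Real.cos (e * θ) - 1)) := by
  unfold Hfun
  rw [Complex.norm_exp]
  congr 1
  rw [Complex.add_re, Complex.re_sum]
  have h1 : ((j:ℂ) * (θ * Complex.I)).re = 0 := by simp
  rw [h1, add_zero]
  apply Finset.sum_congr rfl
  intro e _
  have h2 : (e:ℂ) * (θ * Complex.I) = ((e * θ : ℝ) : ℂ) * Complex.I := by push_cast; ring
  have h3 : ((r:ℂ)^e / e) = ((r^e/e : ℝ) : ℂ) := by push_cast; rfl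
  rw [h3, Complex.re_ofReal_mul, h2, Complex.sub_re, Complex.sub_re, Complex.exp_ofReal_mul_I_re]
  simp

lemma Hfun_norm_le (p j : ℕ) (r θ : ℝ) (hr : 0 ≤ r) (e : ℕ) (he : e ∈ p.divisors) :
    ‖Hfun p j r θ‖ ≤ Real.exp ((r ^ e / e) * (Real.cos (e * θ) - 1)) := by
  rw [Hfun_norm, Real.exp_le_exp]
  have := Finset.single_le_sum (s := p.divisors)
    (f := fun e : ℕ => -((r ^ e / e) * (Real.cos (e * θ) - 1)))
    (fun i _ => by
      have : 0 ≤ (r^i/i) * (1 - Real.cos (i*θ)) := by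
        apply mul_nonneg (by positivity)
        linarith [Real.cos_le_one (i*θ)]
      linarith) he
  rw [Finset.sum_neg_distrib] at this
  linarith

lemma Hfun_bound (p : ℕ) (hp : 2 ≤ p) : ∃ C : ℝ, ∀ j : ℕ, ∀ r : ℝ, 1 ≤ r → ∀ t : ℝ,
    |t| ≤ Real.pi * √(r^p) → ‖Hfun p j r (t / √(r^p))‖ ≤ C * (1 + t^2)⁻¹ := by
  have hp0 : (0:ℝ) < p := by positivity
  set C2 : ℝ := (p.factorial : ℝ) * ((p:ℝ)^2/2)^p * (1 + Real.pi^2) with hC2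
  have hC2' : 0 ≤ C2 := by positivity
  set a : ℝ := 2 * p / Real.pi^2 with ha
  have ha0 : 0 < a := by positivity
  refine ⟨C2 + (1 + 1/a), fun j r hr t ht => ?_⟩
  have hrp : 0 < r^p := by positivity
  set s := √(r^p) with hs
  have hs0 : 0 < s := Real.sqrt_pos.mpr hrp
  have hs2 : s^2 = r^p := Real.sq_sqrt hrp.le
  have ht1 : 0 < 1 + t^2 := by positivity
  rw [← div_eq_mul_inv, le_div_iff₀ ht1]
  by_cases hc : |p * (t / s)| ≤ Real.pi
  · have h1 := Hfun_norm_le p j r (t/s) (by linarith) p (by simp; omega)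
    have h2 := Real.cos_le_one_sub_mul_cos_sq hc
    have h3 : (r ^ p / p) * (Real.cos (p * (t/s)) - 1) ≤ -(a * t^2) := by
      calc _ ≤ (r ^ p / p) * (-(2 / Real.pi^2 * (p * (t/s))^2)) := by
            apply mul_le_mul_of_nonneg_left _ (by positivity)
            linarith
        _ = _ := by rw [← hs2, ha]; field_simp
    have h4 : ‖Hfun p j r (t/s)‖ ≤ Real.exp (-(a*t^2)) := h1.trans (Real.exp_le_exp.mpr h3)
    have h5 : Real.exp (-(a*t^2)) * (1 + a * t^2) ≤ 1 := by
      rw [Real.exp_neg, inv_mul_le_iff₀ (Real.exp_pos _)]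
      linarith [Real.add_one_le_exp (a*t^2)]
    have h6 : 1 + t^2 ≤ (1 + 1/a) * (1 + a*t^2) := by
      have : (1 + 1/a) * (1 + a*t^2) = 1 + t^2 + 1/a + a * t^2 := by field_simp; ring
      rw [this]
      have : 0 < 1/a := by positivity
      have : 0 ≤ a * t^2 := by positivity
      linarith
    calc _ ≤ Real.exp (-(a*t^2)) * ((1 + 1/a) * (1 + a*t^2)) := by gcongr
      _ = (1 + 1/a) * (Real.exp (-(a*t^2)) * (1 + a*t^2)) := by ring
      _ ≤ (1 + 1/a) * 1 := by gcongr
      _ ≤ _ := by linarith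
  · push Not at hc
    have h1 := Hfun_norm_le p j r (t/s) (by linarith) 1 (by simp; omega)
    simp only [pow_one, Nat.cast_one, div_one, one_mul] at h1
    have htp : |t/s| ≤ Real.pi := by
      rw [abs_div, abs_of_pos hs0, div_le_iff₀ hs0]; exact ht
    have h2 := Real.cos_le_one_sub_mul_cos_sq htp
    have h7 : (Real.pi / p)^2 ≤ (t/s)^2 := by
      rw [sq_le_sq, abs_of_pos (a := Real.pi / p) (by positivity), div_le_iff₀ hp0]
      rw [abs_mul, abs_of_pos hp0] at hc
      linarith
    have h3 : r * (Real.cos (t/s) - 1) ≤ -(2 * r / p^2) := by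
      calc _ ≤ r * (-(2 / Real.pi^2 * (Real.pi / p)^2)) := by
            apply mul_le_mul_of_nonneg_left _ (by linarith)
            have : 2 / Real.pi^2 * (Real.pi / p)^2 ≤ 2 / Real.pi^2 * (t/s)^2 := by gcongr
            linarith
        _ = _ := by field_simp
    have h4 : ‖Hfun p j r (t/s)‖ ≤ Real.exp (-(2 * r / p^2)) := h1.trans (Real.exp_le_exp.mpr h3)
    have h5 := Real.pow_div_factorial_le_exp (2 * r / p^2) (by positivity) p
    have h6 : 1 + t^2 ≤ (1 + Real.pi^2) * r^p := by
      have : t^2 ≤ Real.pi^2 * r^p := by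
        rw [← hs2, ← mul_pow, sq_le_sq, abs_of_pos (a := Real.pi * s) (by positivity)]
        exact ht
      have : 1 ≤ r^p := one_le_pow₀ hr
      linarith
    have h8 : Real.exp (-(2 * r / p^2)) * r^p ≤ (p.factorial : ℝ) * ((p:ℝ)^2/2)^p := by
      rw [Real.exp_neg, inv_mul_le_iff₀ (Real.exp_pos _)]
      have : r^p = (2 * r / p^2)^p / p.factorial * ((p.factorial : ℝ) * ((p:ℝ)^2/2)^p) := by
        have hf : (p.factorial : ℝ) ≠ 0 := by positivity
        rw [div_mul_eq_mul_div, mul_left_comm, ← mul_pow, mul_div_cancel_left₀ _ hf]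
        congr 1; field_simp
      nth_rewrite 1 [this]
      gcongr
    calc _ ≤ Real.exp (-(2 * r / p^2)) * ((1 + Real.pi^2) * r^p) := by gcongr
      _ = (Real.exp (-(2 * r / p^2)) * r^p) * (1 + Real.pi^2) := by ring
      _ ≤ C2 := by rw [hC2]; gcongr
      _ ≤ _ := by
        have : 0 < 1/a := by positivity
        linarith

lemma exp_third (x : ℂ) (hx : ‖x‖ ≤ 1) : ‖Complex.exp x - 1 - x - x^2/2‖ ≤ ‖x‖^3 := by
  have := Complex.exp_bound hx (n := 3) (by norm_num)
  simp only [Finset.sum_range_succ, Finset.sum_range_zero] at this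
  norm_num [Nat.factorial] at this
  calc _ = ‖Complex.exp x - (1 + x + x^2/2)‖ := by congr 1; ring
    _ ≤ _ := this
    _ ≤ _ := by
      have : 0 ≤ ‖x‖^3 := by positivity
      linarith

lemma sqrt_tendsto (p : ℕ) (hp : 2 ≤ p) : Tendsto (fun r : ℝ => √(r^p)) atTop atTop :=
  Real.tendsto_sqrt_atTop.comp (tendsto_pow_atTop (by omega))

lemma Hfun_tendsto (p j : ℕ) (hp : 2 ≤ p) (t : ℝ) :
    Tendsto (fun r : ℝ => Hfun p j r (t / √(r^p))) atTop (𝓝 (Complex.exp (-(p * t^2 / 2 : ℝ)))) := by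
  unfold Hfun
  apply (Complex.continuous_exp.tendsto _).comp
  have hst := sqrt_tendsto p hp
  have hts : Tendsto (fun r : ℝ => t / √(r^p)) atTop (𝓝 0) := hst.const_div_atTop t
  have hlast : Tendsto (fun r : ℝ => (j:ℂ) * (((t / √(r^p) : ℝ) : ℂ) * Complex.I)) atTop (𝓝 0) := by
    have h1 : Tendsto (fun r : ℝ => (((t / √(r^p) : ℝ) : ℂ))) atTop (𝓝 ((0:ℝ):ℂ)) :=
      (Complex.continuous_ofReal.tendsto _).comp hts
    have := (h1.mul_const Complex.I).const_mul (j:ℂ)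
    simpa using this
  have hterm : ∀ e ∈ p.divisors, Tendsto (fun r : ℝ => ((r:ℂ) ^ e / e) *
      (Complex.exp (e * (((t / √(r^p) : ℝ) : ℂ) * Complex.I)) - 1 - e * (((t / √(r^p) : ℝ) : ℂ) * Complex.I)))
      atTop (𝓝 (if e = p then (((-(p * t^2 / 2) : ℝ)) : ℂ) else 0)) := by
    intro e he
    have hep : e ≤ p := Nat.divisor_le he
    have he0 : 0 < e := Nat.pos_of_mem_divisors he
    have he0' : (0:ℝ) < e := by exact_mod_cast he0
    have hmain : Tendsto (fun r : ℝ => ((-(e * t^2 / 2) * (r^e / r^p) : ℝ) : ℂ)) atTop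
        (𝓝 (if e = p then (((-(p * t^2 / 2) : ℝ)) : ℂ) else 0)) := by
      have : Tendsto (fun r : ℝ => (-(e * t^2 / 2) * (r^e / r^p) : ℝ)) atTop
        (𝓝 (if e = p then (-(p * t^2 / 2) : ℝ) else 0)) := by
        split_ifs with h
        · subst h
          apply tendsto_const_nhds.congr'
          filter_upwards [eventually_gt_atTop 0] with r hr
          have : r^e ≠ 0 := by positivity
          rw [div_self this, mul_one]
        · have := (tendsto_pow_div_pow_atTop_zero (𝕜 := ℝ) (lt_of_le_of_ne hep h)).const_mul (-(e * t^2 / 2))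
          simpa using this
      have := (Complex.continuous_ofReal.tendsto _).comp this
      have h9 : ((if e = p then (-(p * t^2 / 2) : ℝ) else 0 : ℝ) : ℂ) =
          if e = p then (((-(p * t^2 / 2) : ℝ)) : ℂ) else 0 := by split_ifs <;> simp
      rw [h9] at this
      exact this
    have herr : Tendsto (fun r : ℝ => ((r:ℂ) ^ e / e) *
      (Complex.exp (e * (((t / √(r^p) : ℝ) : ℂ) * Complex.I)) - 1 - e * (((t / √(r^p) : ℝ) : ℂ) * Complex.I)) -
       ((-(e * t^2 / 2) * (r^e / r^p) : ℝ) : ℂ)) atTop (𝓝 0) := by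
      apply squeeze_zero_norm' (a := fun r : ℝ => (e^2 * |t|^3) / √(r^p)) _ (hst.const_div_atTop _)
      have hsmall : ∀ᶠ r : ℝ in atTop, e * |t / √(r^p)| ≤ 1 := by
        have : Tendsto (fun r : ℝ => e * |t / √(r^p)|) atTop (𝓝 (e * |0|)) := (hts.abs).const_mul _
        simp only [abs_zero, mul_zero] at this
        exact (this.eventually (gt_mem_nhds (zero_lt_one))).mono fun _ h => le_of_lt h
      filter_upwards [hsmall, eventually_ge_atTop 1] with r hsm hr
      have hrp : 0 < r^p := by positivity
      set s := √(r^p) with hs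
      have hs0 : 0 < s := Real.sqrt_pos.mpr hrp
      have hs2 : s^2 = r^p := Real.sq_sqrt hrp.le
      set x : ℂ := e * (((t / s : ℝ) : ℂ) * Complex.I) with hx
      have hxn : ‖x‖ = e * |t/s| := by
        rw [hx, norm_mul, norm_mul, Complex.norm_I, Complex.norm_natCast, Complex.norm_real,
          Real.norm_eq_abs, mul_one]
      have h1 := exp_third x (by rw [hxn]; exact hsm)
      have h2 : ((-(e * t^2 / 2) * (r^e / r^p) : ℝ) : ℂ) = ((r:ℂ)^e / e) * (x^2/2) := by
        have hx2 : x^2 = ((-(e * (t/s))^2 : ℝ) : ℂ) := by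
          rw [hx]; push_cast; rw [mul_pow, mul_pow, Complex.I_sq]; ring
        rw [hx2, ← hs2]
        have : (-(e * t^2 / 2) * (r^e / s^2) : ℝ) = (r^e/e) * (-(e * (t/s))^2 / 2) := by
          field_simp
        rw [this]; push_cast; ring
      rw [h2, ← mul_sub, norm_mul]
      have h3 : ‖((r:ℂ)^e/e)‖ = r^e/e := by
        rw [norm_div, norm_pow, Complex.norm_real, Complex.norm_natCast, Real.norm_eq_abs,
          abs_of_pos (by linarith)]
      rw [h3]
      calc _ ≤ r^e/e * ‖x‖^3 := by gcongr
        _ ≤ r^p/e * ‖x‖^3 := by gcongr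
        _ = _ := by
          rw [hxn, abs_div, abs_of_pos hs0, ← hs2]; field_simp
    have := herr.add hmain
    simpa using this
  have := (tendsto_finsetSum _ hterm).add hlast
  rw [Finset.sum_ite_eq' ] at this
  have hpm : p ∈ p.divisors := by simp; omega
  rw [if_pos hpm, add_zero] at this
  simpa using this

lemma Hint_tendsto (p j : ℕ) (hp : 2 ≤ p) :
    Tendsto (fun r : ℝ => ((√(r^p) : ℝ) : ℂ) * ∫ θ in (-Real.pi)..Real.pi, Hfun p j r θ) atTop
      (𝓝 (∫ t : ℝ, Complex.exp (-(p * t^2 / 2 : ℝ)))) := by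
  obtain ⟨C, hC⟩ := Hfun_bound p hp
  have key : Tendsto (fun r : ℝ => ∫ t : ℝ, Set.indicator (Set.Ioc (-Real.pi * √(r^p)) (Real.pi * √(r^p)))
      (fun t => Hfun p j r (t / √(r^p))) t) atTop
      (𝓝 (∫ t : ℝ, Complex.exp (-(p * t^2 / 2 : ℝ)))) := by
    apply MeasureTheory.tendsto_integral_filter_of_dominated_convergence
      (fun t => |C| * (1 + t^2)⁻¹)
    · filter_upwards with r
      apply MeasureTheory.AEStronglyMeasurable.indicator _ measurableSet_Ioc
      exact ((Hfun_continuous p j r).comp (by fun_prop)).aestronglyMeasurable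
    · filter_upwards [eventually_ge_atTop 1] with r hr
      filter_upwards with t
      by_cases ht : t ∈ Set.Ioc (-Real.pi * √(r^p)) (Real.pi * √(r^p))
      · rw [Set.indicator_of_mem ht]
        refine (hC j r hr t ?_).trans ?_
        · rw [abs_le]; constructor
          · linarith [ht.1]
          · exact ht.2
        · gcongr; exact le_abs_self C
      · rw [Set.indicator_of_notMem ht]; simp; positivity
    · exact integrable_inv_one_add_sq.const_mul _
    · filter_upwards with t
      apply (Hfun_tendsto p j hp t).congr'
      have := ((sqrt_tendsto p hp).const_mul_atTop Real.pi_pos).eventually_gt_atTop |t|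
      filter_upwards [this] with r hr
      rw [Set.indicator_of_mem]
      have := abs_lt.mp hr
      constructor <;> linarith [this.1, this.2]
  apply key.congr'
  filter_upwards [eventually_gt_atTop 0] with r hr
  have hrp : 0 < r^p := by positivity
  have hs0 : 0 < √(r^p) := Real.sqrt_pos.mpr hrp
  rw [MeasureTheory.integral_indicator measurableSet_Ioc, ← intervalIntegral.integral_of_le
    (by nlinarith [Real.pi_pos]), intervalIntegral.integral_comp_div _ hs0.ne']
  rw [mul_div_cancel_right₀ _ hs0.ne', mul_div_cancel_right₀ _ hs0.ne', Complex.real_smul]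

lemma gauss_ne (p : ℕ) (hp : 2 ≤ p) : (∫ t : ℝ, Complex.exp (-(p * t^2 / 2 : ℝ))) ≠ 0 := by
  have h : ∀ t : ℝ, Complex.exp (-(p * t^2 / 2 : ℝ)) = ((Real.exp (-(p/2) * t^2) : ℝ) : ℂ) := by
    intro t; push_cast; congr 1; ring
  simp_rw [h]
  rw [integral_complex_ofReal, integral_gaussian]
  have : 0 < √(Real.pi / ((p:ℝ)/2)) := by
    apply Real.sqrt_pos.mpr; positivity
  exact_mod_cast this.ne'

lemma J_eq_H (p j n : ℕ) (r : ℝ) (hn : ∑ e ∈ p.divisors, r ^ e = n) :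
    Jint p.divisors r ((n:ℤ) - j) = Complex.exp (∑ e ∈ p.divisors, (r:ℂ)^e / e) *
      ∫ θ in (-Real.pi)..Real.pi, Hfun p j r θ := by
  unfold Jint
  have h1 := (expoF_periodic p.divisors r ((n:ℤ) - j)).intervalIntegral_add_eq 0 (-Real.pi)
  rw [zero_add] at h1
  rw [h1, show -Real.pi + 2 * Real.pi = Real.pi by ring, ← intervalIntegral.integral_const_mul]
  congr 1
  funext θ
  unfold expoF Hfun
  rw [← Complex.exp_add]
  congr 1
  have hn' : (n:ℂ) = ∑ e ∈ p.divisors, (r:ℂ) ^ e := by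
    have := congrArg (fun x : ℝ => (x:ℂ)) hn
    push_cast at this
    exact this.symm
  push_cast
  rw [hn', sub_mul, Finset.sum_mul, ← add_assoc, ← Finset.sum_add_distrib, sub_sub_eq_add_sub,
    add_sub_right_comm, ← Finset.sum_sub_distrib]
  congr 1
  apply Finset.sum_congr rfl
  intro e he
  have : (e:ℂ) ≠ 0 := by
    have := Nat.pos_of_mem_divisors he
    exact_mod_cast this.ne'
  field_simp
  ring

theorem ratio_tendsto (p : ℕ) (hp : 2 ≤ p) (c : ℕ → ℝ) (hc0 : c 0 = 1)
    (hc : ∀ n : ℕ, 0 < n → (n:ℝ) * c n = ∑ e ∈ p.divisors, if e ≤ n then c (n - e) else 0)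
    (j : ℕ) :
    Tendsto (fun n : ℕ => c (n - j) / c n / (n:ℝ) ^ ((j:ℝ) / p)) atTop (𝓝 1) := by
  have hD : 0 ∉ p.divisors := by simp
  have hpm : p ∈ p.divisors := by simp; omega
  have h1m : 1 ∈ p.divisors := by simp; omega
  have hmono : ∀ x y : ℝ, 0 ≤ x → x ≤ y → ∑ e ∈ p.divisors, x ^ e ≤ ∑ e ∈ p.divisors, y^e := by
    intro x y hx hxy
    apply Finset.sum_le_sum
    intro e _
    gcongr
  have hex : ∀ n : ℕ, ∃ r : ℝ, 0 ≤ r ∧ ∑ e ∈ p.divisors, r ^ e = n := by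
    intro n
    have hcont : ContinuousOn (fun r : ℝ => ∑ e ∈ p.divisors, r ^ e) (Set.Icc 0 n) := by fun_prop
    have h0 : (∑ e ∈ p.divisors, (0:ℝ) ^ e) = 0 := by
      apply Finset.sum_eq_zero
      intro e he
      exact zero_pow (Nat.pos_of_mem_divisors he).ne'
    have h1 : (n:ℝ) ≤ ∑ e ∈ p.divisors, (n:ℝ) ^ e := by
      have := Finset.single_le_sum (s := p.divisors) (f := fun e => (n:ℝ)^e)
        (fun i _ => by positivity) h1m
      simpa using this
    obtain ⟨r, hr, hr2⟩ := (intermediate_value_Icc (Nat.cast_nonneg n) hcont)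
      (show (n:ℝ) ∈ _ from ⟨by simp only [h0]; positivity, h1⟩)
    exact ⟨r, hr.1, hr2⟩
  choose r hr0 hr using hex
  have hrt : Tendsto r atTop atTop := by
    rw [tendsto_atTop]
    intro M
    have := tendsto_natCast_atTop_atTop (R := ℝ) |>.eventually_gt_atTop (∑ e ∈ p.divisors, M ^ e)
    filter_upwards [this] with n hn
    by_contra hlt
    push Not at hlt
    have := hmono _ _ (hr0 n) hlt.le
    rw [hr n] at this
    linarith
  have hL := gauss_ne p hp
  have hX : Tendsto (fun n => (((√((r n)^p) : ℝ) : ℂ) * ∫ θ in (-Real.pi)..Real.pi, Hfun p j (r n) θ) /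
      (((√((r n)^p) : ℝ) : ℂ) * ∫ θ in (-Real.pi)..Real.pi, Hfun p 0 (r n) θ)) atTop (𝓝 1) := by
    have := ((Hint_tendsto p j hp).comp hrt).div ((Hint_tendsto p 0 hp).comp hrt) hL
    rw [div_self hL] at this
    exact this
  have hX2 : Tendsto (fun n => ((c (n - j) / c n / (r n)^j : ℝ) : ℂ)) atTop (𝓝 1) := by
    apply hX.congr'
    filter_upwards [hrt.eventually_gt_atTop 0, eventually_ge_atTop j] with n hn hj
    have hs0 : ((√((r n)^p) : ℝ) : ℂ) ≠ 0 := by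
      have : 0 < √((r n)^p) := Real.sqrt_pos.mpr (by positivity)
      exact_mod_cast this.ne'
    rw [mul_div_mul_left _ _ hs0]
    have h1 := J_eq_H p j n (r n) (hr n)
    have h2 := J_eq_H p 0 n (r n) (hr n)
    rw [← Nat.cast_sub hj, J_eq _ hD (r n) hn c hc0 hc] at h1
    rw [← Nat.cast_sub (Nat.zero_le _), J_eq _ hD (r n) hn c hc0 hc] at h2
    rw [← mul_div_mul_left _ _ (Complex.exp_ne_zero (∑ e ∈ p.divisors, ((r n:ℝ):ℂ)^e / e)), ← h1, ← h2,
      Nat.sub_zero]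
    have h3 : ((r n : ℝ):ℂ)^n = (r n)^(n-j) * (r n)^j := by
      rw [← pow_add]; congr 1; omega
    have hrn : ((r n : ℝ):ℂ) ≠ 0 := by exact_mod_cast hn.ne'
    have hpi : (Real.pi : ℂ) ≠ 0 := by simp [Real.pi_ne_zero]
    rw [h3]
    push_cast
    rw [mul_assoc (2 * (Real.pi:ℂ)), mul_assoc (2 * (Real.pi:ℂ)), mul_div_mul_left _ _ (by simp [Real.pi_ne_zero] : (2 * (Real.pi:ℂ)) ≠ 0),
      mul_comm (c (n-j) : ℂ), mul_left_comm (c n : ℂ), mul_div_mul_left _ _ (pow_ne_zero _ hrn), div_div]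
  have hX3 : Tendsto (fun n => c (n - j) / c n / (r n)^j) atTop (𝓝 1) := by
    have := (Complex.continuous_re.tendsto _).comp hX2
    simpa only [Function.comp_def, Complex.ofReal_re, Complex.one_re] using this
  have hR : Tendsto (fun n : ℕ => (r n)^p / (n:ℝ)) atTop (𝓝 1) := by
    have h1 : Tendsto (fun x : ℝ => ∑ e ∈ p.divisors, x^e / x^p) atTop
        (𝓝 (∑ e ∈ p.divisors, if e = p then 1 else 0)) := by
      apply tendsto_finsetSum
      intro e he
      split_ifs with h
      · subst h
        apply tendsto_const_nhds.congr'
        filter_upwards [eventually_gt_atTop 0] with x hx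
        rw [div_self (by positivity)]
      · exact tendsto_pow_div_pow_atTop_zero (lt_of_le_of_ne (Nat.divisor_le he) h)
    rw [Finset.sum_ite_eq', if_pos hpm] at h1
    have h2 := (h1.comp hrt).inv₀ one_ne_zero
    rw [inv_one] at h2
    apply h2.congr
    intro n
    simp only [Function.comp]
    rw [← Finset.sum_div, hr n, inv_div]
  have hR2 : Tendsto (fun n : ℕ => (r n)^j / (n:ℝ)^((j:ℝ)/p)) atTop (𝓝 1) := by
    have := hR.rpow_const (p := (j:ℝ)/p) (Or.inl one_ne_zero)
    rw [Real.one_rpow] at this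
    apply this.congr
    intro n
    have hp0 : (p:ℝ) ≠ 0 := by positivity
    rw [Real.div_rpow (pow_nonneg (hr0 n) _) (by positivity), ← Real.rpow_natCast, ← Real.rpow_mul (hr0 n),
      mul_div_cancel₀ _ hp0, Real.rpow_natCast]
  have := hX3.mul hR2
  rw [mul_one] at this
  apply this.congr'
  filter_upwards [hrt.eventually_gt_atTop 0] with n hn
  have : (r n)^j ≠ 0 := by positivity
  field_simp

noncomputable def torsCount (p n : ℕ) : ℕ := Nat.card {σ : Equiv.Perm (Fin n) // σ ^ p = 1}

lemma torsCount_eq (p : ℕ) {α : Type*} [Fintype α] (n : ℕ) (h : Fintype.card α = n) :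
    Nat.card {σ : Equiv.Perm α // σ ^ p = 1} = torsCount p n := by
  unfold torsCount
  let E := Fintype.equivFinOfCardEq h
  refine Nat.card_congr (Equiv.subtypeEquiv E.permCongrHom.toEquiv ?_)
  intro σ
  rw [← map_eq_one_iff E.permCongrHom E.permCongrHom.injective, map_pow]
  rfl

def fcast (e : ℕ) [NeZero e] (i : ℕ) : Fin e := ⟨i % e, Nat.mod_lt _ (Nat.pos_of_neZero e)⟩

lemma fcast_zero (e : ℕ) [NeZero e] : fcast e 0 = 0 := by ext; simp [fcast]

lemma fcast_succ (e : ℕ) [NeZero e] (i : ℕ) : fcast e i + 1 = fcast e (i + 1) := by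
  ext; simp [fcast, Fin.val_add]

lemma fcast_eq_zero (e : ℕ) [NeZero e] (i : ℕ) : fcast e i = 0 ↔ e ∣ i := by
  rw [Fin.ext_iff, Nat.dvd_iff_mod_eq_zero]; simp [fcast]

lemma fcast_val (e : ℕ) [NeZero e] (i : Fin e) : fcast e i.val = i := by
  ext; simp [fcast, Nat.mod_eq_of_lt i.2]

lemma addRight_pow_one (e p : ℕ) [NeZero e] (hep : e ∣ p) :
    (Equiv.addRight (1 : Fin e)) ^ p = 1 := by
  ext i : 1
  have : ∀ q : ℕ, ((Equiv.addRight (1 : Fin e)) ^ q) i = i + fcast e q := by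
    intro q
    induction q with
    | zero => simp [fcast_zero]
    | succ q ih =>
      rw [pow_succ', Equiv.Perm.mul_apply, ih]
      simp only [Equiv.coe_addRight, add_assoc, fcast_succ]
  rw [this, (fcast_eq_zero e p).mpr hep]; simp

lemma count_fixed_cycle (p e : ℕ) [NeZero e] (hep : e ∣ p) {α : Type*} [Fintype α]
    (f : Fin e ↪ α) :
    Nat.card {σ : Equiv.Perm α // σ ^ p = 1 ∧ ∀ i, σ (f i) = f (i + 1)} =
      torsCount p (Fintype.card α - e) := by
  classical
  set ρ : Equiv.Perm α := (Equiv.addRight (1 : Fin e)).viaFintypeEmbedding f with hρ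
  have hρ1 : ∀ i, ρ (f i) = f (i + 1) := by
    intro i; rw [hρ, Equiv.Perm.viaFintypeEmbedding_apply_image]; rfl
  have hρ2 : ∀ x, x ∉ Set.range f → ρ x = x := by
    intro x hx
    exact Equiv.Perm.viaFintypeEmbedding_apply_notMem_range _ _ hx
  have hρp : ρ ^ p = 1 := by
    have h1 : ρ = Equiv.Perm.extendDomainHom f.toEquivRange (Equiv.addRight (1 : Fin e)) := rfl
    rw [h1, ← map_pow, addRight_pow_one e p hep, map_one]
  let q : α → Prop := fun x => x ∉ Set.range f
  have E1 : {σ : Equiv.Perm α // σ ^ p = 1 ∧ ∀ i, σ (f i) = f (i + 1)} ≃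
      {τ : Equiv.Perm α // τ ^ p = 1 ∧ ∀ a, ¬ q a → τ a = a} := by
    refine Equiv.symm (Equiv.subtypeEquiv (Equiv.mulLeft ρ) ?_)
    intro τ
    have hcond : (∀ i, (ρ * τ) (f i) = f (i + 1)) ↔ ∀ a, ¬ q a → τ a = a := by
      constructor
      · intro h a ha
        simp only [q, not_not] at ha
        obtain ⟨i, rfl⟩ := ha
        have := h i
        rw [Equiv.Perm.mul_apply, ← hρ1] at this
        exact ρ.injective this
      · intro h i
        rw [Equiv.Perm.mul_apply, h (f i) (by simp [q]), hρ1]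
    change _ ↔ (ρ * τ)^p = 1 ∧ ∀ i, (ρ * τ) (f i) = f (i + 1)
    rw [hcond]
    refine and_congr_left fun h => ?_
    have hd : ρ.Disjoint τ := by
      intro x
      by_cases hx : q x
      · exact Or.inl (hρ2 x hx)
      · exact Or.inr (h x hx)
    rw [hd.commute.mul_pow, hρp, one_mul]
  let F : {τ : Equiv.Perm (Subtype q) // τ ^ p = 1} →
      {τ : Equiv.Perm α // τ ^ p = 1 ∧ ∀ a, ¬ q a → τ a = a} := fun τ =>
    ⟨Equiv.Perm.ofSubtype τ.1, by rw [← map_pow, τ.2, map_one], fun a ha =>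
      Equiv.Perm.ofSubtype_apply_of_not_mem _ ha⟩
  have hF : Function.Bijective F := by
    constructor
    · intro a b hab
      have := congrArg Subtype.val hab
      exact Subtype.ext (Equiv.Perm.ofSubtype_injective this)
    · rintro ⟨τ, h1, h2⟩
      obtain ⟨τ', hτ'⟩ := (Equiv.Perm.subtypeEquivSubtypePerm q).surjective ⟨τ, h2⟩
      have h3 : Equiv.Perm.ofSubtype τ' = τ := congrArg Subtype.val hτ'
      refine ⟨⟨τ', ?_⟩, Subtype.ext h3⟩
      apply Equiv.Perm.ofSubtype_injective (p := q)
      rw [map_pow, h3, h1, map_one]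
  rw [Nat.card_congr E1, ← Nat.card_congr (Equiv.ofBijective F hF)]
  apply torsCount_eq
  have := Fintype.card_subtype_compl (fun x => x ∈ Set.range f)
  rw [← Nat.card_eq_fintype_card] at this ⊢
  rw [this]
  congr 1
  have h5 := Set.card_range_of_injective f.injective
  rw [Fintype.card_fin] at h5
  exact (Fintype.card_congr (Equiv.refl _)).trans h5

lemma count_period (p e : ℕ) [NeZero e] (hep : e ∣ p) {α : Type*} [Fintype α] :
    Nat.card {q : Equiv.Perm α × α // q.1 ^ p = 1 ∧ Function.minimalPeriod q.1 q.2 = e} =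
      (Fintype.card α).descFactorial e * torsCount p (Fintype.card α - e) := by
  classical
  have hit : ∀ (f : Fin e ↪ α) (σ : Equiv.Perm α), (∀ i, σ (f i) = f (i + 1)) →
      ∀ i : ℕ, σ^[i] (f 0) = f (fcast e i) := by
    intro f σ h i
    induction i with
    | zero => simp [fcast_zero]
    | succ i ih => rw [Function.iterate_succ_apply', ih, h, fcast_succ]
  let F : (Σ f : Fin e ↪ α, {σ : Equiv.Perm α // σ ^ p = 1 ∧ ∀ i, σ (f i) = f (i + 1)}) →
      {q : Equiv.Perm α × α // q.1 ^ p = 1 ∧ Function.minimalPeriod q.1 q.2 = e} := fun x =>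
    ⟨(x.2.1, x.1 0), x.2.2.1, by
      obtain ⟨f, σ, h1, h2⟩ := x
      have hdv : ∀ i : ℕ, Function.IsPeriodicPt σ i (f 0) ↔ e ∣ i := by
        intro i
        rw [Function.IsPeriodicPt, Function.IsFixedPt, hit f σ h2, f.injective.eq_iff,
          fcast_eq_zero]
      apply Nat.dvd_antisymm
      · exact ((hdv e).mpr dvd_rfl).minimalPeriod_dvd
      · exact (hdv _).mp (Function.isPeriodicPt_minimalPeriod _ _)⟩
  have hF : Function.Bijective F := by
    constructor
    · rintro ⟨f, σ, h1, h2⟩ ⟨f', σ', h1', h2'⟩ hab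
      have := congrArg Subtype.val hab
      simp only [F, Prod.mk.injEq] at this
      obtain ⟨rfl, h0⟩ := this
      have : f = f' := by
        ext i
        have a1 := hit f σ h2 i
        have a2 := hit f' σ h2' i
        rw [fcast_val] at a1 a2
        rw [← a1, ← a2, h0]
      subst this
      rfl
    · rintro ⟨⟨σ, x⟩, h1, h2⟩
      simp only at h1 h2
      refine ⟨⟨⟨fun i => σ^[i.val] x, ?_⟩, σ, h1, ?_⟩, ?_⟩
      · intro i j hij
        have := Function.iterate_injOn_Iio_minimalPeriod (f := σ) (x := x)
          (by rw [h2]; exact i.2) (by rw [h2]; exact j.2) hij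
        exact Fin.ext this
      · intro i
        change σ (σ^[i.val] x) = σ^[(i+1).val] x
        rw [← Function.iterate_succ_apply' σ, ← Function.iterate_mod_minimalPeriod_eq (n := i.val.succ), h2]
        have h9 : (i + 1).val = i.val.succ % e := by
          have := fcast_succ e i.val
          rw [fcast_val] at this
          rw [this]; rfl
        rw [h9]
      · apply Subtype.ext
        change (σ, σ^[(0 : Fin e).val] x) = (σ, x)
        simp
  rw [← Nat.card_congr (Equiv.ofBijective F hF), Nat.card_sigma]
  rw [Finset.sum_congr rfl (fun f _ => count_fixed_cycle p e hep f)]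
  simp [Fintype.card_embedding_eq]

lemma sum_fix (p d n : ℕ) (hd : 0 < d) (hdp : d ∣ p) :
    Nat.card {q : Equiv.Perm (Fin n) × Fin n // q.1 ^ p = 1 ∧ (q.1 ^ d) q.2 = q.2} =
      ∑ e ∈ d.divisors, n.descFactorial e * torsCount p (n - e) := by
  classical
  rw [Nat.card_eq_fintype_card, Fintype.card_subtype]
  rw [Finset.card_eq_sum_card_fiberwise (f := fun q => Function.minimalPeriod q.1 q.2) (t := d.divisors)]
  · apply Finset.sum_congr rfl
    intro e he
    have hed := Nat.dvd_of_mem_divisors he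
    have : NeZero e := ⟨(Nat.pos_of_mem_divisors he).ne'⟩
    have := count_period p e (hed.trans hdp) (α := Fin n)
    rw [Fintype.card_fin, Nat.card_eq_fintype_card, Fintype.card_subtype] at this
    rw [← this, Finset.filter_filter]
    congr 1
    apply Finset.filter_congr
    rintro ⟨σ, x⟩ -
    constructor
    · rintro ⟨⟨h1, h2⟩, h3⟩; exact ⟨h1, h3⟩
    · rintro ⟨h1, h3⟩
      refine ⟨⟨h1, ?_⟩, h3⟩
      have : Function.IsPeriodicPt σ d x := by
        apply Function.isPeriodicPt_iff_minimalPeriod_dvd.mpr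
        simp only at h3
        rw [h3]; exact hed
      rw [← Equiv.Perm.iterate_eq_pow]
      exact this
  · rintro ⟨σ, x⟩ h
    simp only [Finset.coe_filter, Set.mem_ofPred_eq, Finset.mem_univ, true_and] at h
    rw [Finset.mem_coe, Nat.mem_divisors]
    refine ⟨Function.isPeriodicPt_iff_minimalPeriod_dvd.mp ?_, hd.ne'⟩
    have h2 := h.2
    rw [← Equiv.Perm.iterate_eq_pow] at h2
    exact h2

lemma torsCount_pos (p n : ℕ) : 0 < torsCount p n := by
  have : Nonempty {σ : Equiv.Perm (Fin n) // σ ^ p = 1} := ⟨⟨1, one_pow _⟩⟩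
  exact Nat.card_pos

noncomputable def cSeq (p n : ℕ) : ℝ := torsCount p n / n.factorial

lemma desc_cSeq (p n e : ℕ) : ((n.descFactorial e * torsCount p (n - e) : ℕ) : ℝ) =
    n.factorial * (if e ≤ n then cSeq p (n - e) else 0) := by
  split_ifs with h
  · unfold cSeq
    have := Nat.factorial_mul_descFactorial h
    have h2 : (((n - e).factorial * n.descFactorial e : ℕ) : ℝ) = n.factorial := by rw [this]
    rw [← h2]
    have : ((n - e).factorial : ℝ) ≠ 0 := by positivity
    push_cast
    field_simp
  · rw [Nat.descFactorial_of_lt (by omega)]; simp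

lemma cSeq_rec (p n : ℕ) (hp : 0 < p) :
    (n:ℝ) * cSeq p n = ∑ e ∈ p.divisors, if e ≤ n then cSeq p (n - e) else 0 := by
  have h := sum_fix p p n hp dvd_rfl
  have h2 : Nat.card {q : Equiv.Perm (Fin n) × Fin n // q.1 ^ p = 1 ∧ (q.1 ^ p) q.2 = q.2} =
      torsCount p n * n := by
    have E : {q : Equiv.Perm (Fin n) × Fin n // q.1 ^ p = 1 ∧ (q.1 ^ p) q.2 = q.2} ≃
        {σ : Equiv.Perm (Fin n) // σ ^ p = 1} × Fin n :=
      { toFun := fun q => (⟨q.1.1, q.2.1⟩, q.1.2)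
        invFun := fun q => ⟨(q.1.1, q.2), q.1.2, by rw [q.1.2]; rfl⟩
        left_inv := fun _ => rfl
        right_inv := fun _ => rfl }
    rw [Nat.card_congr E, Nat.card_prod]; simp [torsCount]
  rw [h2] at h
  have h3 := congrArg (fun x : ℕ => (x:ℝ)) h
  rw [Nat.cast_sum, Finset.sum_congr rfl (fun e _ => desc_cSeq p n e), ← Finset.mul_sum] at h3
  have hf : (n.factorial : ℝ) ≠ 0 := by positivity
  apply mul_left_cancel₀ hf
  rw [← h3]
  unfold cSeq
  push_cast
  field_simp

lemma cSeq_zero (p : ℕ) : cSeq p 0 = 1 := by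
  have : torsCount p 0 = 1 := by
    unfold torsCount
    rw [Nat.card_eq_one_iff_unique]
    exact ⟨inferInstance, ⟨⟨1, one_pow _⟩⟩⟩
  simp [cSeq, this]

theorem fix_ratio_tendsto (p d : ℕ) (hp : 2 ≤ p) (hd : d ∣ p) :
    Tendsto (fun n : ℕ =>
      (Nat.card {q : Equiv.Perm (Fin n) × Fin n // q.1 ^ p = 1 ∧ (q.1 ^ d) q.2 = q.2} : ℝ) /
        torsCount p n / (n:ℝ) ^ ((d:ℝ)/p)) atTop (𝓝 1) := by
  have hd0 : 0 < d := Nat.pos_of_dvd_of_pos hd (by omega)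
  have hp0 : (0:ℝ) < p := by positivity
  have key : Tendsto (fun n : ℕ => ∑ e ∈ d.divisors,
      (cSeq p (n - e) / cSeq p n / (n:ℝ)^((e:ℝ)/p)) * (n:ℝ)^(-(((d:ℝ) - e)/p))) atTop
      (𝓝 (∑ e ∈ d.divisors, if e = d then 1 else 0)) := by
    apply tendsto_finsetSum
    intro e he
    have h1 := ratio_tendsto p hp (cSeq p) (cSeq_zero p) (fun n _ => cSeq_rec p n (by omega)) e
    split_ifs with h
    · subst h
      simpa using h1
    · have hlt : (e:ℝ) < d := by
        exact_mod_cast lt_of_le_of_ne (Nat.divisor_le he) h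
      have h2 : Tendsto (fun n : ℕ => (n:ℝ)^(-(((d:ℝ) - e)/p))) atTop (𝓝 0) :=
        (tendsto_rpow_neg_atTop (div_pos (by linarith) hp0)).comp tendsto_natCast_atTop_atTop
      simpa using h1.mul h2
  have hdm : d ∈ d.divisors := by simp; omega
  rw [Finset.sum_ite_eq', if_pos hdm] at key
  apply key.congr'
  filter_upwards [eventually_ge_atTop d, eventually_gt_atTop 0] with n hn hn0
  have hn0' : (0:ℝ) < n := by exact_mod_cast hn0
  rw [sum_fix p d n hd0 hd, Nat.cast_sum, Finset.sum_congr rfl (fun e _ => desc_cSeq p n e),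
    Finset.sum_div, Finset.sum_div]
  apply Finset.sum_congr rfl
  intro e he
  rw [if_pos ((Nat.divisor_le he).trans hn)]
  have h1 : (n:ℝ)^((d:ℝ)/p) = (n:ℝ)^((e:ℝ)/p) * (n:ℝ)^(((d:ℝ)-e)/p) := by
    rw [← Real.rpow_add hn0']; congr 1; ring
  rw [h1, Real.rpow_neg hn0'.le]
  have h2 : cSeq p n = torsCount p n / n.factorial := rfl
  rw [h2]
  have h3 : (torsCount p n : ℝ) ≠ 0 := by exact_mod_cast (torsCount_pos p n).ne'
  have h4 : (n.factorial : ℝ) ≠ 0 := by positivity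
  have h5 := (Real.rpow_pos_of_pos hn0' ((e:ℝ)/p)).ne'
  have h6 := (Real.rpow_pos_of_pos hn0' (((d:ℝ)-e)/p)).ne'
  field_simp

lemma neWord_prod_ne_one {ι : Type*} {M : ι → Type*} [∀ i, Group (M i)] {i j : ι}
    (w : Monoid.CoprodI.NeWord M i j) : w.prod ≠ 1 := by
  classical
  intro h
  have h2 : w.toWord = Monoid.CoprodI.Word.empty := by
    apply (Monoid.CoprodI.Word.equiv (M := M)).symm.injective
    exact h
  exact w.toList_ne_nil (congrArg Monoid.CoprodI.Word.toList h2)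

lemma neWord_pow {ι : Type*} {M : ι → Type*} [∀ i, Group (M i)] {i j : ι} (hij : i ≠ j)
    (w : Monoid.CoprodI.NeWord M i j) (n : ℕ) :
    ∃ w' : Monoid.CoprodI.NeWord M i j, w'.prod = w.prod ^ (n + 1) := by
  induction n with
  | zero => exact ⟨w, by simp⟩
  | succ n ih =>
    obtain ⟨w', hw'⟩ := ih
    refine ⟨w.append hij.symm w', ?_⟩
    rw [Monoid.CoprodI.NeWord.append_prod, hw', ← pow_succ']

lemma coprodI_torsion_word {ι : Type*} {M : ι → Type*} [∀ i, Group (M i)] (N : ℕ) :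
    ∀ w : Monoid.CoprodI.Word M, w.toList.length ≤ N → (∃ n, 0 < n ∧ w.prod ^ n = 1) →
      w.prod = 1 ∨ ∃ (i : ι) (m : M i) (v : Monoid.CoprodI M),
        w.prod = v * Monoid.CoprodI.of m * v⁻¹ := by
  induction N with
  | zero =>
    intro w hw _
    left
    have : w.toList = [] := List.length_eq_zero_iff.mp (by omega)
    simp [Monoid.CoprodI.Word.prod, this]
  | succ N ih =>
    rintro w hw ⟨n, hn, hpow⟩
    by_cases hemp : w = Monoid.CoprodI.Word.empty
    · left; rw [hemp]; simp
    obtain ⟨i, j, w', hw'⟩ := Monoid.CoprodI.NeWord.of_word w hemp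
    have hpr : w'.prod = w.prod := by rw [← hw']; rfl
    by_cases hij : i = j
    · subst hij
      have hhead : w.toList.head? = some ⟨i, w'.head⟩ := by
        rw [← hw']; exact w'.toList_head?
      have hlast : w.toList.getLast? = some ⟨i, w'.last⟩ := by
        rw [← hw']; exact w'.toList_getLast?
      obtain ⟨l, hl1, hl2⟩ := w
      simp only at hhead hlast hw
      generalize w'.head = a at hhead
      generalize w'.last = b at hlast
      clear hpr hw' w' hemp
      cases l with
      | nil => simp at hhead
      | cons x t =>
        simp only [List.head?_cons, Option.some.injEq] at hhead
        subst hhead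
        right
        rcases List.eq_nil_or_concat' t with rfl | ⟨mid, y, rfl⟩
        · exact ⟨i, a, 1, by simp [Monoid.CoprodI.Word.prod]⟩
        · have hy : y = ⟨i, b⟩ := by
            simpa [List.getLast?_cons] using hlast
          subst hy
          have hmidchain : mid.IsChain (fun l l' => Sigma.fst l ≠ Sigma.fst l') := by
            have := hl2.tail
            rw [List.tail_cons, List.isChain_append] at this
            exact this.1
          have hmid1 : ∀ l ∈ mid, Sigma.snd l ≠ 1 := fun l hl => hl1 l (by simp [hl])
          let wm : Monoid.CoprodI.Word M := ⟨mid, hmid1, hmidchain⟩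
          have hP : (Monoid.CoprodI.Word.prod ⟨_, hl1, hl2⟩ : Monoid.CoprodI M) =
              Monoid.CoprodI.of a * (wm.prod * Monoid.CoprodI.of (b * a)) * (Monoid.CoprodI.of a)⁻¹ := by
            simp [Monoid.CoprodI.Word.prod, wm, mul_assoc]
          have hfin : ∀ z : Monoid.CoprodI M, (wm.prod * Monoid.CoprodI.of (b * a)) = z → z ^ n = 1 := by
            rintro z rfl
            rw [hP, conj_pow, mul_inv_eq_one] at hpow
            simpa using hpow
          have hne : wm.prod * Monoid.CoprodI.of (b * a) ≠ 1 := by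
            intro h1
            rw [h1, mul_one, mul_inv_cancel] at hP
            have h2 : (⟨_, hl1, hl2⟩ : Monoid.CoprodI.Word M) = Monoid.CoprodI.Word.empty := by
              classical
              apply (Monoid.CoprodI.Word.equiv (M := M)).symm.injective
              exact hP
            have h3 := congrArg Monoid.CoprodI.Word.toList h2
            simp at h3
          have fin : ∀ w2 : Monoid.CoprodI.Word M, w2.toList.length ≤ N →
              w2.prod = wm.prod * Monoid.CoprodI.of (b * a) →
              ∃ (i : ι) (m : M i) (v : Monoid.CoprodI M),
                (Monoid.CoprodI.Word.prod ⟨_, hl1, hl2⟩ : Monoid.CoprodI M)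
                  = v * Monoid.CoprodI.of m * v⁻¹ := by
            intro w2 hlen hw2
            rcases ih w2 hlen ⟨n, hn, hfin _ hw2.symm⟩ with h | ⟨i', m, v, h⟩
            · exact absurd (hw2 ▸ h) hne
            · refine ⟨i', m, Monoid.CoprodI.of a * v, ?_⟩
              rw [hP, ← hw2, h]; group
          simp only [List.length_cons, List.length_append, List.length_nil] at hw
          by_cases hba : b * a = 1
          · exact fin wm (by simp only [wm]; omega) (by rw [hba]; simp)
          · refine fin ⟨mid ++ [⟨i, b * a⟩], ?_, ?_⟩ ?_ ?_
            · intro l hl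
              rcases List.mem_append.mp hl with h | h
              · exact hmid1 l h
              · simp only [List.mem_singleton] at h; subst h; exact hba
            · have := hl2.tail
              rw [List.tail_cons, List.isChain_append] at this
              rw [List.isChain_append]
              refine ⟨this.1, by simp, ?_⟩
              intro x hx y hy
              have := this.2.2 x hx ⟨i, b⟩ (by simp)
              simp only [List.head?_cons, Option.mem_def, Option.some.injEq] at hy
              subst hy
              exact this
            · simp; omega
            · simp [Monoid.CoprodI.Word.prod, wm]
    · exfalso
      obtain ⟨w2, h2⟩ := neWord_pow hij w' (n - 1)
      apply neWord_prod_ne_one w2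
      rw [h2, hpr, Nat.sub_add_cancel hn, hpow]

lemma coprodI_torsion {ι : Type*} {M : ι → Type*} [∀ i, Group (M i)] (x : Monoid.CoprodI M)
    (hx : x ≠ 1) (n : ℕ) (hn : 0 < n) (hpow : x ^ n = 1) :
    ∃ (i : ι) (m : M i) (v : Monoid.CoprodI M), x = v * Monoid.CoprodI.of m * v⁻¹ := by
  classical
  have h := (Monoid.CoprodI.Word.equiv (M := M)).symm_apply_apply x
  have h' : (Monoid.CoprodI.Word.equiv x).prod = x := h
  rcases coprodI_torsion_word _ (Monoid.CoprodI.Word.equiv x) le_rfl ⟨n, hn, by rw [h', hpow]⟩ with h1 | h1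
  · exact absurd (h' ▸ h1) hx
  · rw [h'] at h1; exact h1

lemma gen_pow (m : ℕ) (p : Fin m → ℕ) (i : Fin m) :
    (PresentedGroup.of i : CyclicFreeProduct m p) ^ p i = 1 := by
  have : (PresentedGroup.mk (cyclicRels m p)) (FreeGroup.of i ^ p i) = 1 :=
    PresentedGroup.one_of_mem ⟨i, rfl⟩
  rw [map_pow] at this
  exact this

lemma rels_lift (m : ℕ) (p : Fin m → ℕ) {K : Type*} [Group K] (f : Fin m → K)
    (hf : ∀ i, f i ^ p i = 1) : ∀ r ∈ cyclicRels m p, FreeGroup.lift f r = 1 := by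
  rintro r ⟨i, rfl⟩
  rw [map_pow, FreeGroup.lift_apply_of, hf]

lemma gen_order (m : ℕ) (p : Fin m → ℕ) (i : Fin m) :
    orderOf (PresentedGroup.of i : CyclicFreeProduct m p) = p i := by
  apply Nat.dvd_antisymm (orderOf_dvd_of_pow_eq_one (gen_pow m p i))
  let f : Fin m → Multiplicative (ZMod (p i)) := fun j => if j = i then Multiplicative.ofAdd 1 else 1
  have hf : ∀ j, f j ^ p j = 1 := by
    intro j
    simp only [f]
    split_ifs with h
    · subst h
      rw [← ofAdd_nsmul]; simp
    · simp
  have h1 := orderOf_map_dvd (PresentedGroup.toGroup (rels_lift m p f hf))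
    (PresentedGroup.of i : CyclicFreeProduct m p)
  rw [PresentedGroup.toGroup.of] at h1
  simpa [f, orderOf_ofAdd_eq_addOrderOf, ZMod.addOrderOf_one] using h1

lemma torsion_conj (m : ℕ) (p : Fin m → ℕ) (g : CyclicFreeProduct m p) (hg : g ≠ 1) (k : ℕ)
    (hk : 0 < k) (hpow : g ^ k = 1) :
    ∃ (i : Fin m) (a : ℤ) (v : CyclicFreeProduct m p),
      g = v * (PresentedGroup.of i) ^ a * v⁻¹ := by
  let M : Fin m → Type := fun i =>
    Subgroup.zpowers (PresentedGroup.of i : CyclicFreeProduct m p)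
  letI : ∀ i, Group (M i) := fun i => inferInstanceAs (Group (Subgroup.zpowers (PresentedGroup.of i : CyclicFreeProduct m p)))
  let gen : ∀ i, M i := fun i => ⟨PresentedGroup.of i, Subgroup.mem_zpowers _⟩
  have hgen : ∀ i, (Monoid.CoprodI.of (gen i) : Monoid.CoprodI M) ^ p i = 1 := by
    intro i
    rw [← map_pow]
    have : gen i ^ p i = 1 := Subtype.ext (gen_pow m p i)
    rw [this, map_one]
  let f : CyclicFreeProduct m p →* Monoid.CoprodI M := PresentedGroup.toGroup
    (rels_lift m p (fun i => (Monoid.CoprodI.of (gen i) : Monoid.CoprodI M)) hgen)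
  let h : Monoid.CoprodI M →* CyclicFreeProduct m p :=
    Monoid.CoprodI.lift (fun i => (Subgroup.zpowers (PresentedGroup.of i : CyclicFreeProduct m p)).subtype)
  have hfh : h.comp f = MonoidHom.id _ := by
    apply PresentedGroup.ext
    intro i
    simp only [MonoidHom.comp_apply, f, h, MonoidHom.id_apply]
    rw [PresentedGroup.toGroup.of, Monoid.CoprodI.lift_of]
    rfl
  have hfh' : ∀ x, h (f x) = x := fun x => DFunLike.congr_fun hfh x
  have hfg : f g ≠ 1 := by
    intro h1
    apply hg
    rw [← hfh' g, h1, map_one]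
  obtain ⟨i, y, v, hv⟩ := coprodI_torsion (f g) hfg k hk (by rw [← map_pow, hpow, map_one])
  obtain ⟨a, ha⟩ := Subgroup.mem_zpowers_iff.mp y.2
  refine ⟨i, a, h v, ?_⟩
  rw [← hfh' g, hv, map_mul, map_mul, map_inv, ha]
  congr 2

lemma homFixCount_conj {G : Type*} [Group G] {n : ℕ} (x v : G) (φ : G →* Equiv.Perm (Fin n)) :
    homFixCount (v * x * v⁻¹) φ = homFixCount x φ := by
  unfold homFixCount
  refine Nat.card_congr (Equiv.subtypeEquiv (φ v)⁻¹ ?_)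
  intro a
  rw [map_mul, map_mul, map_inv, Equiv.Perm.mul_apply, Equiv.Perm.mul_apply]
  conv_rhs => rw [← (φ v).injective.eq_iff]
  simp

lemma homFixCount_zpow {G : Type*} [Group G] {n : ℕ} (x y : G) (φ : G →* Equiv.Perm (Fin n))
    (hxy : x ∈ Subgroup.zpowers y) (hyx : y ∈ Subgroup.zpowers x) :
    homFixCount x φ = homFixCount y φ := by
  obtain ⟨a, rfl⟩ := Subgroup.mem_zpowers_iff.mp hxy
  obtain ⟨b, hb⟩ := Subgroup.mem_zpowers_iff.mp hyx
  unfold homFixCount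
  refine Nat.card_congr (Equiv.subtypeEquiv (Equiv.refl _) ?_)
  intro z
  simp only [Equiv.refl_apply]
  constructor
  · intro h
    have := Equiv.Perm.zpow_apply_eq_self_of_apply_eq_self h b
    rwa [← map_zpow, hb] at this
  · intro h
    have := Equiv.Perm.zpow_apply_eq_self_of_apply_eq_self h a
    rwa [← map_zpow] at this

lemma zpow_same {G : Type*} [Group G] (x : G) (p : ℕ) (hp : 0 < p) (hx : orderOf x = p) (a : ℤ) (k : ℕ)
    (hk : orderOf (x ^ a) = k) : ∃ d : ℕ, d * k = p ∧ x ^ a ∈ Subgroup.zpowers (x ^ d) ∧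
      x ^ d ∈ Subgroup.zpowers (x ^ a) := by
  have hfin : IsOfFinOrder x := orderOf_pos_iff.mp (hx ▸ hp)
  obtain ⟨b, hb⟩ : ∃ b : ℕ, x ^ b = x ^ a := by
    have h1 : x ^ a ∈ Subgroup.zpowers x := Subgroup.zpow_mem_zpowers _ _
    rw [← hfin.mem_powers_iff_mem_zpowers] at h1
    exact h1
  rw [← hb] at hk ⊢
  rw [hfin.orderOf_pow, hx] at hk
  have hdvd := Nat.gcd_dvd_left p b
  refine ⟨Nat.gcd p b, by rw [← hk, Nat.mul_div_cancel' hdvd], ?_, ?_⟩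
  · obtain ⟨c, hc⟩ := Nat.gcd_dvd_right p b
    refine Subgroup.mem_zpowers_iff.mpr ⟨c, ?_⟩
    rw [zpow_natCast, ← pow_mul, ← hc]
  · refine Subgroup.mem_zpowers_iff.mpr ⟨Nat.gcdB p b, ?_⟩
    have h2 : x ^ ((p:ℤ) * Nat.gcdA p b) = 1 := by
      rw [zpow_mul, zpow_natCast, ← hx, pow_orderOf_eq_one, one_zpow]
    rw [← zpow_natCast, ← zpow_natCast, Nat.gcd_eq_gcd_ab, zpow_add, h2, one_mul, zpow_mul]

lemma hom_split (m : ℕ) (p : Fin m → ℕ) (i : Fin m) (n : ℕ) :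
    ∃ E : (CyclicFreeProduct m p →* Equiv.Perm (Fin n)) ≃
      {σ : Equiv.Perm (Fin n) // σ ^ p i = 1} ×
        (∀ j : {j // j ≠ i}, {σ : Equiv.Perm (Fin n) // σ ^ p j = 1}),
      ∀ φ, ((E φ).1 : Equiv.Perm (Fin n)) = φ (PresentedGroup.of i) := by
  let E1 : (CyclicFreeProduct m p →* Equiv.Perm (Fin n)) ≃
      (∀ j, {σ : Equiv.Perm (Fin n) // σ ^ p j = 1}) :=
    { toFun := fun φ j => ⟨φ (PresentedGroup.of j), by rw [← map_pow, gen_pow, map_one]⟩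
      invFun := fun t => PresentedGroup.toGroup (rels_lift m p (fun j => (t j).1) (fun j => (t j).2))
      left_inv := by
        intro φ
        apply PresentedGroup.ext
        intro j
        rw [PresentedGroup.toGroup.of]
      right_inv := by
        intro t
        funext j
        apply Subtype.ext
        simp only
        rw [PresentedGroup.toGroup.of] }
  exact ⟨E1.trans (Equiv.piSplitAt i _), fun φ => rfl⟩

lemma homExp_eq (m : ℕ) (p : Fin m → ℕ) (i : Fin m) (n d : ℕ) :
    homExp (CyclicFreeProduct m p) n
      (fun φ => (homFixCount ((PresentedGroup.of i : CyclicFreeProduct m p) ^ d) φ : ℝ)) =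
    (Nat.card {q : Equiv.Perm (Fin n) × Fin n // q.1 ^ p i = 1 ∧ (q.1 ^ d) q.2 = q.2} : ℝ) /
        torsCount (p i) n := by
  classical
  obtain ⟨E, hE⟩ := hom_split m p i n
  letI : Fintype (CyclicFreeProduct m p →* Equiv.Perm (Fin n)) := Fintype.ofEquiv _ E.symm
  have hR : Nonempty (∀ j : {j // j ≠ i}, {σ : Equiv.Perm (Fin n) // σ ^ p j = 1}) := ⟨fun j => ⟨1, one_pow _⟩⟩
  have hRc : (Fintype.card (∀ j : {j // j ≠ i}, {σ : Equiv.Perm (Fin n) // σ ^ p j = 1}) : ℝ) ≠ 0 := by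
    exact_mod_cast Fintype.card_ne_zero
  unfold homExp
  rw [tsum_fintype, Nat.card_congr E, Nat.card_prod, Nat.cast_mul]
  have h1 : ∑ φ : CyclicFreeProduct m p →* Equiv.Perm (Fin n),
      (homFixCount ((PresentedGroup.of i : CyclicFreeProduct m p) ^ d) φ : ℝ) =
      ∑ q : {σ : Equiv.Perm (Fin n) // σ ^ p i = 1} × (∀ j : {j // j ≠ i}, {σ : Equiv.Perm (Fin n) // σ ^ p j = 1}),
        (Nat.card {x : Fin n // (q.1.1 ^ d) x = x} : ℝ) := by
    apply Fintype.sum_equiv E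
    intro φ
    rw [hE φ, ← map_pow]
    rfl
  rw [h1, Fintype.sum_prod_type]
  simp only [Finset.sum_const, Finset.card_univ, nsmul_eq_mul]
  rw [← Finset.mul_sum, Nat.card_eq_fintype_card (α := (∀ j : {j // j ≠ i}, {σ : Equiv.Perm (Fin n) // σ ^ p j = 1})), mul_comm _ (Fintype.card (∀ j : {j // j ≠ i}, {σ : Equiv.Perm (Fin n) // σ ^ p j = 1}) : ℝ),
    mul_div_mul_left _ _ hRc]
  congr 1
  rw [← Nat.cast_sum, ← Nat.card_sigma]
  congr 1
  exact Nat.card_congr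
    { toFun := fun x => ⟨(x.1.1, x.2.1), x.1.2, x.2.2⟩
      invFun := fun q => ⟨⟨q.1.1, q.2.1⟩, ⟨q.1.2, q.2.2⟩⟩
      left_inv := fun _ => rfl
      right_inv := fun _ => rfl }

theorem expected_fixed_points_finite_order (m : ℕ) (p : Fin m → ℕ) (hp : ∀ i, 2 ≤ p i)
    (g : CyclicFreeProduct m p) (hg : g ≠ 1) (k : ℕ) (hk : 0 < k) (hord : orderOf g = k) :
    Filter.Tendsto (fun n : ℕ =>
      homExp (CyclicFreeProduct m p) n (fun φ => (homFixCount g φ : ℝ)) /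
        (n : ℝ) ^ ((1 : ℝ) / (k : ℝ)))
      Filter.atTop (𝓝 1) := by

  obtain ⟨i, a, v, hv⟩ := torsion_conj m p g hg k hk (hord ▸ pow_orderOf_eq_one g)
  have hord2 : orderOf ((PresentedGroup.of i : CyclicFreeProduct m p) ^ a) = k := by
    rw [← hord, hv]
    exact (orderOf_injective (MulAut.conj v).toMonoidHom (MulAut.conj v).injective _).symm
  obtain ⟨d, hdk, h1, h2⟩ := zpow_same (PresentedGroup.of i : CyclicFreeProduct m p) (p i)
    (by have := hp i; omega) (gen_order m p i) a k hord2
  have hfc : ∀ (n : ℕ) (φ : CyclicFreeProduct m p →* Equiv.Perm (Fin n)), homFixCount g φ =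
      homFixCount ((PresentedGroup.of i : CyclicFreeProduct m p) ^ d) φ := by
    intro n φ
    rw [hv, homFixCount_conj]
    exact homFixCount_zpow _ _ φ h1 h2
  have hfin := fix_ratio_tendsto (p i) d (hp i) ⟨k, hdk.symm⟩
  have hexp : (d:ℝ) / (p i : ℕ) = 1 / (k:ℝ) := by
    have hd0 : (d:ℝ) ≠ 0 := by
      intro h0
      have h0' : d = 0 := by exact_mod_cast h0
      have := hp i
      rw [h0', zero_mul] at hdk
      omega
    rw [← hdk]
    push_cast
    field_simp
  rw [hexp] at hfin
  apply hfin.congr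
  intro n
  simp only [hfc]
  rw [homExp_eq]
end

section
/- Let p_1,…,p_m ∈ ℕ with each p_i ≥ 2 and Σ_{i=1}^m 1/p_i < m−1, and set G = C_{p_1} * ⋯ * C_{p_m}. Then for every nontrivial conjugacy class K of G, the average of Z_K(H) over all index n subgroups H of G is o(n) as n → ∞. (By the fixed-point characterisation of weak-* convergence of invariant random subgroups, this expresses that a uniformly random index n subgroup of G converges, as an invariant random subgroup, to the Dirac mass at the trivial subgroup.) -/
open Filter Topology Asymptotics
open scoped TensorProduct

/-- `Z_g(H)`: the number of fixed points of `g` acting on the coset space `G ⧸ H`.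
For any `g` in a conjugacy class `K`, this equals `Z_K(H)`. -/
noncomputable def fixedCosetCount {G : Type*} [Group G] (g : G) (H : Subgroup G) : ℕ :=
  Nat.card {x : G ⧸ H // g • x = x}

/-- the expectation of `f` over a uniformly random index `n` subgroup of `G` -/
noncomputable def subgroupExp (G : Type*) [Group G] (n : ℕ) (f : Subgroup G → ℝ) : ℝ :=
  (∑' H : {H : Subgroup G // H.index = n}, f H.1) /
    (Nat.card {H : Subgroup G // H.index = n} : ℝ)



/-- permutations with `σ ^ p = 1` -/
abbrev IX (p : ℕ) (α : Type) : Type := {σ : Equiv.Perm α // σ ^ p = 1}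

noncomputable def ifc (p n : ℕ) : ℕ := Nat.card (IX p (Fin n))

lemma IX_card (p : ℕ) (α : Type) [Fintype α] : Nat.card (IX p α) = ifc p (Fintype.card α) := by
  unfold ifc
  let e := Fintype.equivFin α
  refine Nat.card_congr (Equiv.subtypeEquiv (Equiv.permCongrHom e).toEquiv ?_)
  intro σ
  have : ((Equiv.permCongrHom e) σ) ^ p = (Equiv.permCongrHom e) (σ ^ p) := (map_pow _ _ _).symm
  simp only [MulEquiv.toEquiv_eq_coe, EquivLike.coe_coe]
  rw [this, map_eq_one_iff _ (MulEquiv.injective _)]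

lemma ifc_pos (p n : ℕ) : 0 < ifc p n := by
  have : Nonempty (IX p (Fin n)) := ⟨⟨1, by simp⟩⟩
  exact Nat.card_pos

lemma IX_fix_card (p : ℕ) (α : Type) [Fintype α] (P : α → Prop) [DecidablePred P] :
    Nat.card {σ : IX p α // ∀ a, ¬ P a → σ.1 a = a} = Nat.card (IX p (Subtype P)) := by
  symm
  refine Nat.card_congr ?_
  refine Equiv.ofBijective (fun σ => ⟨⟨Equiv.Perm.ofSubtype σ.1, by
    rw [← map_pow, σ.2, map_one]⟩, fun a ha => Equiv.Perm.ofSubtype_apply_of_not_mem _ ha⟩) ⟨?_, ?_⟩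
  · intro σ τ h
    simp only [Subtype.mk.injEq] at h
    exact Subtype.ext (Equiv.Perm.ofSubtype_injective h)
  · rintro ⟨⟨σ, hσ⟩, hf⟩
    obtain ⟨τ, hτ⟩ := (Equiv.Perm.subtypeEquivSubtypePerm P).surjective ⟨σ, hf⟩
    have h1 : Equiv.Perm.ofSubtype τ = σ := congrArg Subtype.val hτ
    refine ⟨⟨τ, ?_⟩, ?_⟩
    · apply Equiv.Perm.ofSubtype_injective (p := P)
      rw [map_pow, h1, hσ, map_one]
    · simp only [Subtype.mk.injEq]
      exact h1

/-- pairs of a permutation and a `d`-tuple of fixed points -/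
abbrev FixTup (p n d : ℕ) : Type :=
  {q : IX p (Fin n) × (Fin d ↪ Fin n) // ∀ j, q.1.1 (q.2 j) = q.2 j}

lemma FixTup_card (p n d : ℕ) : Nat.card (FixTup p n d) = n.descFactorial d * ifc p (n - d) := by
  classical
  have e : FixTup p n d ≃ Σ a : (Fin d ↪ Fin n), {σ : IX p (Fin n) // ∀ x, ¬ (x ∉ Set.range a) → σ.1 x = x} :=
    { toFun := fun q => ⟨q.1.2, q.1.1, by
        intro x hx
        simp only [not_not] at hx
        obtain ⟨j, rfl⟩ := hx
        exact q.2 j⟩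
      invFun := fun s => ⟨(s.2.1, s.1), fun j => s.2.2 _ (by simp)⟩
      left_inv := fun q => rfl
      right_inv := fun s => rfl }
  rw [Nat.card_congr e, Nat.card_sigma]
  have : ∀ a : (Fin d ↪ Fin n), Nat.card {σ : IX p (Fin n) // ∀ x, ¬ (x ∉ Set.range a) → σ.1 x = x} = ifc p (n - d) := by
    intro a
    rw [IX_fix_card p (Fin n) (fun x => x ∉ Set.range a), IX_card]
    congr 1
    rw [Fintype.card_subtype_compl]
    simp only [Fintype.card_fin]
    congr 1
    have := Set.card_range_of_injective a.injective
    rw [Fintype.card_fin] at this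
    exact (Fintype.card_congr (Equiv.refl _)).trans this
  simp only [this, Finset.sum_const, smul_eq_mul, Finset.card_univ, Fintype.card_embedding_eq, Fintype.card_fin]

lemma FixTup_le (p n : ℕ) (hp : 0 < p) : Nat.card (FixTup p n p) ≤ n * ifc p n := by
  classical
  have : NeZero p := ⟨hp.ne'⟩
  have hc : n * ifc p n = Nat.card (Fin n × IX p (Fin n)) := by
    rw [Nat.card_prod, Nat.card_fin]; rfl
  rw [hc]
  let cyc : (Fin p ↪ Fin n) → Equiv.Perm (Fin n) := fun a =>
    (Equiv.addRight (1 : Fin p)).viaFintypeEmbedding a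
  have hcyc : ∀ a j, cyc a (a j) = a (j + 1) := fun a j => by
    simp [cyc, Equiv.Perm.viaFintypeEmbedding_apply_image]
  have hcyc' : ∀ (a : Fin p ↪ Fin n) x, x ∉ Set.range a → cyc a x = x := fun a x hx =>
    Equiv.Perm.viaFintypeEmbedding_apply_notMem_range _ _ hx
  have hcp : ∀ a (k : ℕ) j, (cyc a ^ k) (a j) = a (j + k • 1) := by
    intro a k
    induction k with
    | zero => simp
    | succ k ih =>
      intro j
      rw [pow_succ', Equiv.Perm.mul_apply, ih, hcyc, succ_nsmul, add_assoc]
  have hcp1 : ∀ a, cyc a ^ p = 1 := by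
    intro a
    ext x
    by_cases hx : x ∈ Set.range a
    · obtain ⟨j, rfl⟩ := hx
      rw [hcp]
      have : p • (1 : Fin p) = 0 := by
        have := card_nsmul_eq_zero' (x := (1 : Fin p)) (G := Fin p)
        simpa using this
      rw [this]; simp
    · rw [Equiv.Perm.pow_apply_eq_self_of_apply_eq_self (hcyc' a x hx)]; simp
  have hcomm : ∀ q : FixTup p n p, Commute q.1.1.1 (cyc q.1.2) := by
    intro q
    apply Equiv.Perm.Disjoint.commute
    intro x
    by_cases hx : x ∈ Set.range q.1.2
    · obtain ⟨j, rfl⟩ := hx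
      left; exact q.2 j
    · right; exact hcyc' _ _ hx
  have hst : ∀ (q : FixTup p n p) (k : ℕ), ((q.1.1.1 * cyc q.1.2) ^ k) (q.1.2 0) = q.1.2 (k • 1) := by
    intro q k
    induction k with
    | zero => simp
    | succ k ih =>
      rw [pow_succ', Equiv.Perm.mul_apply, ih, Equiv.Perm.mul_apply, hcyc, q.2, succ_nsmul]
  refine Nat.card_le_card_of_injective (fun q => (q.1.2 0, ⟨q.1.1.1 * cyc q.1.2, by
    rw [(hcomm q).mul_pow, q.1.1.2, hcp1, one_mul]⟩)) ?_
  intro q r hqr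
  simp only [Prod.mk.injEq, Subtype.mk.injEq] at hqr
  obtain ⟨h0, h1⟩ := hqr
  have ha : q.1.2 = r.1.2 := by
    ext j : 1
    have hk : ∀ k : ℕ, (k • (1 : Fin p)).val = k % p := by
      intro k
      induction k with
      | zero => simp
      | succ k ih => rw [succ_nsmul, Fin.val_add, ih, Fin.val_one', Nat.add_mod k 1]
    have hj : (j : ℕ) • (1 : Fin p) = j := by
      apply Fin.ext
      rw [hk, Nat.mod_eq_of_lt j.2]
    rw [← hj, ← hst q, ← hst r, h0, h1]
  rw [ha] at h1
  have hs := mul_right_cancel h1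
  apply Subtype.ext
  apply Prod.ext
  · exact Subtype.ext hs
  · exact ha

lemma cycPts_le (p n d : ℕ) (hd : 0 < d) :
    Nat.card {q : IX p (Fin n) × Fin n // Function.minimalPeriod q.1.1 q.2 = d} ≤
      Nat.card (FixTup p n d) := by
  classical
  have hin : ∀ q : {q : IX p (Fin n) × Fin n // Function.minimalPeriod q.1.1 q.2 = d},
      Function.Injective (fun j : Fin d => (q.1.1.1 ^ (j : ℕ)) q.1.2) := by
    intro q i j hij
    simp only [← Equiv.Perm.iterate_eq_pow] at hij
    have := (Function.iterate_eq_iterate_iff_of_lt_minimalPeriod (by rw [q.2]; exact i.2) (by rw [q.2]; exact j.2)).1 hij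
    exact Fin.ext this
  have hper : ∀ q : {q : IX p (Fin n) × Fin n // Function.minimalPeriod q.1.1 q.2 = d},
      (q.1.1.1 ^ d) q.1.2 = q.1.2 := by
    intro q
    have := Function.iterate_minimalPeriod (f := q.1.1.1) (x := q.1.2)
    rw [q.2] at this
    rw [← Equiv.Perm.iterate_eq_pow]; exact this
  have hcp : ∀ (σ : IX p (Fin n)) (v : Fin n), (σ.1.cycleOf v) ^ p = 1 := by
    intro σ v
    have hk : ∀ k : ℕ, ∀ x, σ.1.SameCycle v x → ((σ.1.cycleOf v) ^ k) x = (σ.1 ^ k) x := by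
      intro k
      induction k with
      | zero => intro x _; simp
      | succ k ih =>
        intro x hx
        rw [pow_succ, Equiv.Perm.mul_apply, Equiv.Perm.cycleOf_apply, if_pos hx, ih _ (by simpa using hx), pow_succ, Equiv.Perm.mul_apply]
    ext x
    by_cases hx : σ.1.SameCycle v x
    · rw [hk p x hx, σ.2]
    · rw [Equiv.Perm.pow_apply_eq_self_of_apply_eq_self (by rw [Equiv.Perm.cycleOf_apply, if_neg hx])]; simp
  have hout : ∀ (σ : IX p (Fin n)) (v x : Fin n), ¬ σ.1.SameCycle v x → (σ.1 * (σ.1.cycleOf v)⁻¹) x = σ.1 x := by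
    intro σ v x hx
    rw [Equiv.Perm.mul_apply]
    congr 1
    rw [Equiv.Perm.inv_eq_iff_eq, Equiv.Perm.cycleOf_apply, if_neg hx]
  have hinn : ∀ (σ : IX p (Fin n)) (v x : Fin n), σ.1.SameCycle v x → (σ.1 * (σ.1.cycleOf v)⁻¹) x = x := by
    intro σ v x hx
    rw [Equiv.Perm.mul_apply]
    have h2 : σ.1.SameCycle v (σ.1⁻¹ x) := by simpa using hx
    have : (σ.1.cycleOf v)⁻¹ x = σ.1⁻¹ x := by
      rw [Equiv.Perm.inv_eq_iff_eq, Equiv.Perm.cycleOf_apply, if_pos h2]; simp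
    rw [this]; simp
  have hcomm : ∀ (σ : IX p (Fin n)) (v : Fin n), Commute σ.1 (σ.1.cycleOf v)⁻¹ := by
    intro σ v
    apply Commute.inv_right
    refine Equiv.ext fun x => ?_
    rw [Equiv.Perm.mul_apply, Equiv.Perm.mul_apply, Equiv.Perm.cycleOf_apply, Equiv.Perm.cycleOf_apply]
    by_cases hx : σ.1.SameCycle v x
    · have : σ.1.SameCycle v (σ.1 x) := by simpa using hx
      rw [if_pos hx, if_pos this]
    · have : ¬ σ.1.SameCycle v (σ.1 x) := by simpa using hx
      rw [if_neg hx, if_neg this]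
  have hrange : ∀ (q : {q : IX p (Fin n) × Fin n // Function.minimalPeriod q.1.1 q.2 = d}) x,
      q.1.1.1.SameCycle q.1.2 x → ∃ j : Fin d, (q.1.1.1 ^ (j : ℕ)) q.1.2 = x := by
    intro q x hx
    obtain ⟨k, -, hk⟩ := hx.exists_pow_eq'
    refine ⟨⟨k % d, Nat.mod_lt _ hd⟩, ?_⟩
    rw [← hk]
    simp only [← Equiv.Perm.iterate_eq_pow]
    have := Function.iterate_mod_minimalPeriod_eq (f := q.1.1.1) (x := q.1.2) (n := k)
    rwa [q.2] at this
  refine Nat.card_le_card_of_injective (fun q => ⟨(⟨q.1.1.1 * (q.1.1.1.cycleOf q.1.2)⁻¹, by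
    rw [(hcomm _ _).mul_pow, q.1.1.2, inv_pow, hcp]; simp⟩, ⟨_, hin q⟩), ?_⟩) ?_
  · intro j
    apply hinn
    exact ⟨(j : ℕ), by simp⟩
  · intro q r hqr
    simp only [Subtype.mk.injEq, Prod.mk.injEq, Function.Embedding.mk.injEq] at hqr
    obtain ⟨h1, h2⟩ := hqr
    have h2 : ∀ k (hk : k < d), (q.1.1.1 ^ k) q.1.2 = (r.1.1.1 ^ k) r.1.2 := fun k hk => congrFun h2 ⟨k, hk⟩
    have hv : q.1.2 = r.1.2 := by simpa using h2 0 hd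
    apply Subtype.ext
    refine Prod.ext (Subtype.ext ?_) hv
    have h3 : ∀ k ≤ d, (q.1.1.1 ^ k) q.1.2 = (r.1.1.1 ^ k) r.1.2 := by
      intro k hk
      rcases hk.lt_or_eq with hk | rfl
      · exact h2 k hk
      · rw [hper, hper, hv]
    refine Equiv.ext fun x => ?_
    by_cases hx : q.1.1.1.SameCycle q.1.2 x
    · obtain ⟨j, rfl⟩ := hrange q x hx
      rw [← Equiv.Perm.mul_apply, ← pow_succ', h3 _ j.2, h3 _ j.2.le, ← Equiv.Perm.mul_apply, ← pow_succ']
    · have hx' : ¬ r.1.1.1.SameCycle r.1.2 x := by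
        intro h
        obtain ⟨j, rfl⟩ := hrange r x h
        apply hx
        rw [← h3 _ j.2.le]
        exact ⟨(j : ℕ), by simp⟩
      rw [← hout _ _ _ hx, ← hout _ _ _ hx', h1]


lemma FixTup_card_sum (p n d : ℕ) : Nat.card (FixTup p n d) =
    ∑ σ : IX p (Fin n), (Nat.card {v // σ.1 v = v}).descFactorial d := by
  classical
  have e : FixTup p n d ≃ Σ σ : IX p (Fin n), (Fin d ↪ {v // σ.1 v = v}) :=
    { toFun := fun q => ⟨q.1.1, ⟨fun j => ⟨q.1.2 j, q.2 j⟩, fun i j hij => by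
        simpa using hij⟩⟩
      invFun := fun s => ⟨(s.1, s.2.trans (Function.Embedding.subtype _)), fun j => (s.2 j).2⟩
      left_inv := fun q => rfl
      right_inv := fun s => rfl }
  rw [Nat.card_congr e, Nat.card_sigma]
  refine Finset.sum_congr rfl fun σ _ => ?_
  rw [Nat.card_eq_fintype_card, Fintype.card_embedding_eq, Fintype.card_fin, Nat.card_eq_fintype_card]

lemma perms_period {p n : ℕ} (hp : 0 < p) (s : Finset ℕ) (Q : IX p (Fin n) × Fin n → Prop)
    (hQ : ∀ q, Q q → Function.minimalPeriod q.1.1 q.2 ∈ s) (hs : ∀ d ∈ s, d ∣ p) :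
    Nat.card {q // Q q} ≤ ∑ d ∈ s, Nat.card (FixTup p n d) := by
  classical
  calc Nat.card {q // Q q} 
      ≤ Nat.card (Σ d : s, {q : IX p (Fin n) × Fin n // Function.minimalPeriod q.1.1 q.2 = d.1}) := by
        refine Nat.card_le_card_of_injective (fun q => ⟨⟨_, hQ q.1 q.2⟩, ⟨q.1, rfl⟩⟩) ?_
        intro q r h
        have h2 := congrArg (fun z : (Σ d : s, {q : IX p (Fin n) × Fin n // Function.minimalPeriod q.1.1 q.2 = d.1}) => z.2.1) h
        exact Subtype.ext h2
    _ = ∑ d : s, Nat.card {q : IX p (Fin n) × Fin n // Function.minimalPeriod q.1.1 q.2 = d.1} := Nat.card_sigma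
    _ = ∑ d ∈ s, Nat.card {q : IX p (Fin n) × Fin n // Function.minimalPeriod q.1.1 q.2 = d} := 
        Finset.sum_coe_sort s (fun d => Nat.card {q : IX p (Fin n) × Fin n // Function.minimalPeriod q.1.1 q.2 = d})
    _ ≤ _ := Finset.sum_le_sum fun d hd => cycPts_le p n d (Nat.pos_of_dvd_of_pos (hs d hd) hp)

lemma period_dvd {p n : ℕ} (q : IX p (Fin n) × Fin n) : Function.minimalPeriod q.1.1 q.2 ∣ p := by
  apply Function.IsPeriodicPt.minimalPeriod_dvd
  show (q.1.1)^[p] q.2 = q.2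
  rw [Equiv.Perm.iterate_eq_pow, q.1.2]; rfl

lemma rec_le {p n : ℕ} (hp : 0 < p) : n * ifc p n ≤ ∑ d ∈ p.divisors, Nat.card (FixTup p n d) := by
  have := perms_period hp p.divisors (n := n) (fun _ => True) (fun q _ => by
    rw [Nat.mem_divisors]; exact ⟨period_dvd q, hp.ne'⟩) (fun d hd => Nat.dvd_of_mem_divisors hd)
  refine le_trans (le_of_eq ?_) this
  rw [Nat.card_congr (Equiv.subtypeUnivEquiv (fun _ => trivial)), Nat.card_prod, Nat.card_fin, mul_comm]
  rfl

lemma fixpow_le {p n e : ℕ} (hp : 0 < p) (he : ¬ p ∣ e) :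
    Nat.card {q : IX p (Fin n) × Fin n // (q.1.1 ^ e) q.2 = q.2} ≤
     ∑ d ∈ p.properDivisors, Nat.card (FixTup p n d) := by
  refine perms_period hp p.properDivisors _ (fun q hq => ?_) (fun d hd => (Nat.mem_properDivisors.1 hd).1)
  have h1 := period_dvd q
  rw [Nat.mem_properDivisors]
  refine ⟨h1, lt_of_le_of_ne (Nat.le_of_dvd hp h1) ?_⟩
  intro h2
  apply he
  rw [← h2]
  apply Function.IsPeriodicPt.minimalPeriod_dvd
  show (q.1.1)^[e] q.2 = q.2
  rw [Equiv.Perm.iterate_eq_pow, hq]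

noncomputable def imu (p n : ℕ) : ℝ := n * ifc p (n - 1) / ifc p n

lemma imu_nonneg (p n : ℕ) : 0 ≤ imu p n := by unfold imu; positivity

lemma FixTup_prod (p n d : ℕ) : (Nat.card (FixTup p n d) : ℝ) / ifc p n = ∏ j ∈ Finset.range d, imu p (n - j) := by
  rw [FixTup_card]
  have hpos : ∀ k, (ifc p k : ℝ) ≠ 0 := fun k => by exact_mod_cast (ifc_pos p k).ne'
  induction d with
  | zero => simp [hpos]
  | succ d ih =>
    rw [Finset.prod_range_succ, ← ih, Nat.descFactorial_succ, imu]
    have := hpos (n-d)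
    have := hpos n
    rw [Nat.sub_add_eq]
    push_cast
    field_simp

lemma imu_le {p n : ℕ} (hp : 0 < p) : imu p n ≤ p + (n : ℝ) ^ (1 / (p : ℝ)) := by
  classical
  obtain ⟨r, rfl⟩ : ∃ r, p = r + 1 := ⟨p - 1, by omega⟩
  set p := r + 1 with hpdef
  have hf : (0 : ℝ) < ifc p n := by exact_mod_cast ifc_pos p n
  let X : IX p (Fin n) → ℕ := fun σ => Nat.card {v // σ.1 v = v}
  have h1 : imu p n = (∑ σ, (X σ : ℝ)) / ifc p n := by
    have := FixTup_prod p n 1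
    rw [FixTup_card_sum] at this
    simp only [Nat.descFactorial_one, Finset.prod_range_one, Nat.sub_zero] at this
    rw [← this]; push_cast; rfl
  have hcard : ((Finset.univ : Finset (IX p (Fin n))).card : ℝ) = ifc p n := by
    rw [Finset.card_univ, ← Nat.card_eq_fintype_card]; rfl
  have h2 : ∑ σ, (X σ - p) ^ p ≤ n * ifc p n := by
    refine le_trans ?_ (FixTup_le p n hp)
    rw [FixTup_card_sum]
    refine Finset.sum_le_sum fun σ _ => ?_
    refine le_trans ?_ (Nat.pow_sub_le_descFactorial _ _)
    exact Nat.pow_le_pow_left (by show X σ - p ≤ X σ + 1 - p; omega) _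
  have h3 := pow_sum_div_card_le_sum_pow (s := (Finset.univ : Finset (IX p (Fin n)))) (f := fun σ => ((X σ - p : ℕ) : ℝ)) (fun _ _ => by positivity) r
  rw [hcard] at h3
  set Y : ℝ := ∑ σ, ((X σ - p : ℕ) : ℝ) with hY
  have hY0 : 0 ≤ Y := Finset.sum_nonneg fun _ _ => by positivity
  have h4 : (Y / ifc p n) ^ p ≤ n := by
    have h2' : (∑ σ, ((X σ - p : ℕ) : ℝ) ^ p) ≤ n * ifc p n := by exact_mod_cast h2
    have := h3.trans h2'
    rw [div_le_iff₀ (by positivity)] at this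
    rw [div_pow, div_le_iff₀ (by positivity), hpdef]
    refine this.trans (le_of_eq ?_)
    ring
  have h5 : Y / ifc p n ≤ (n : ℝ) ^ (1 / (p : ℝ)) := by
    have h6 : 0 ≤ Y / ifc p n := by positivity
    rw [one_div]
    calc Y / ifc p n = ((Y / ifc p n) ^ p) ^ ((p : ℝ)⁻¹) := (Real.pow_rpow_inv_natCast h6 (by omega)).symm
      _ ≤ _ := Real.rpow_le_rpow (by positivity) h4 (by positivity)
  have h7 : (∑ σ, (X σ : ℝ)) ≤ p * ifc p n + Y := by
    rw [hY, ← hcard, mul_comm, ← nsmul_eq_mul, ← Finset.sum_const, ← Finset.sum_add_distrib]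
    refine Finset.sum_le_sum fun σ _ => ?_
    have : X σ ≤ p + (X σ - p) := by omega
    exact_mod_cast this
  rw [h1]
  refine le_trans ?_ (add_le_add_right h5 _)
  rw [div_le_iff₀ hf, add_mul, div_mul_cancel₀ _ hf.ne']
  exact h7

lemma imu_le' {p n : ℕ} (hp : 0 < p) (j : ℕ) : imu p (n - j) ≤ p + (n : ℝ) ^ (1 / (p : ℝ)) := by
  refine (imu_le hp).trans ?_
  gcongr
  exact Nat.sub_le _ _

lemma small_le {p n : ℕ} (hp : 2 ≤ p) : (∑ d ∈ p.properDivisors, (Nat.card (FixTup p n d) : ℝ)) / ifc p n ≤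
    p * (p + (n : ℝ) ^ (1 / (p : ℝ))) ^ (p - 1) := by
  rw [Finset.sum_div]
  have hy : (1 : ℝ) ≤ p + (n : ℝ) ^ (1 / (p : ℝ)) := by
    have : (2 : ℝ) ≤ p := by exact_mod_cast hp
    have : (0 : ℝ) ≤ (n : ℝ) ^ (1 / (p : ℝ)) := by positivity
    linarith
  have : ∀ d ∈ p.properDivisors, (Nat.card (FixTup p n d) : ℝ) / ifc p n ≤ (p + (n : ℝ) ^ (1 / (p : ℝ))) ^ (p - 1) := by
    intro d hd
    rw [FixTup_prod]
    calc _ ≤ ∏ j ∈ Finset.range d, (p + (n : ℝ) ^ (1 / (p : ℝ))) :=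
          Finset.prod_le_prod (fun _ _ => imu_nonneg _ _) (fun j _ => imu_le' (by omega) j)
      _ = (p + (n : ℝ) ^ (1 / (p : ℝ))) ^ d := by simp
      _ ≤ _ := pow_le_pow_right₀ hy (by have := (Nat.mem_properDivisors.1 hd).2; omega)
  refine (Finset.sum_le_card_nsmul _ _ _ this).trans ?_
  rw [nsmul_eq_mul]
  gcongr
  have : p.properDivisors.card ≤ (Finset.Ico 1 p).card := Finset.card_le_card (Finset.filter_subset _ _)
  simp at this
  omega

lemma imu_ge {p n : ℕ} (hp : 2 ≤ p) : (n : ℝ) ≤ (imu p n + p) * (p + (n : ℝ) ^ (1 / (p : ℝ))) ^ (p - 1) := by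
  have hf : (0 : ℝ) < ifc p n := by exact_mod_cast ifc_pos p n
  have h1 : (n : ℝ) * ifc p n ≤ ∑ d ∈ p.divisors, (Nat.card (FixTup p n d) : ℝ) := by
    exact_mod_cast rec_le (n := n) (show 0 < p by omega)
  rw [← Nat.insert_self_properDivisors (by omega), Finset.sum_insert Nat.self_notMem_properDivisors] at h1
  have h2 : (n : ℝ) ≤ (Nat.card (FixTup p n p) : ℝ) / ifc p n + (∑ d ∈ p.properDivisors, (Nat.card (FixTup p n d) : ℝ)) / ifc p n := by
    rw [← add_div, le_div_iff₀ hf]; exact h1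
  have h3 := small_le (n := n) hp
  have h4 : (Nat.card (FixTup p n p) : ℝ) / ifc p n ≤ imu p n * (p + (n : ℝ) ^ (1 / (p : ℝ))) ^ (p - 1) := by
    rw [FixTup_prod]
    obtain ⟨r, rfl⟩ : ∃ r, p = r + 1 := ⟨p - 1, by omega⟩
    rw [Finset.prod_range_succ', mul_comm]
    simp only [Nat.sub_zero, Nat.add_sub_cancel]
    refine mul_le_mul_of_nonneg_left ?_ (imu_nonneg _ _)
    calc _ ≤ ∏ j ∈ Finset.range r, (((r + 1 : ℕ) : ℝ) + (n : ℝ) ^ (1 / ((r + 1 : ℕ) : ℝ))) :=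
          Finset.prod_le_prod (fun _ _ => imu_nonneg _ _) (fun j _ => imu_le' (by omega) _)
      _ = _ := by simp
  rw [add_mul]
  linarith

lemma u_tendsto {p : ℕ} (hp : 2 ≤ p) : Tendsto (fun n : ℕ => (n : ℝ) ^ (1 / (p : ℝ))) atTop atTop :=
  (tendsto_rpow_atTop (by positivity)).comp tendsto_natCast_atTop_atTop

lemma pu_tendsto {p : ℕ} (hp : 2 ≤ p) : Tendsto (fun n : ℕ => (p : ℝ) / (n : ℝ) ^ (1 / (p : ℝ))) atTop (𝓝 0) :=
  (u_tendsto hp).const_div_atTop _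

lemma u_pow {p n : ℕ} (hp : 2 ≤ p) : (n : ℝ) = (n : ℝ) ^ (1 / (p : ℝ)) * ((n : ℝ) ^ (1 / (p : ℝ))) ^ (p - 1) := by
  rw [← pow_succ', Nat.sub_add_cancel (by omega), one_div, Real.rpow_inv_natCast_pow (by positivity) (by omega)]

lemma imu_tendsto {p : ℕ} (hp : 2 ≤ p) : Tendsto (fun n : ℕ => imu p n / (n : ℝ) ^ (1 / (p : ℝ))) atTop (𝓝 1) := by
  have hpu := pu_tendsto hp
  have lo : Tendsto (fun n : ℕ => (((p : ℝ) / (n : ℝ) ^ (1 / (p : ℝ)) + 1) ^ (p - 1))⁻¹ - (p : ℝ) / (n : ℝ) ^ (1 / (p : ℝ))) atTop (𝓝 1) := by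
    have := (((hpu.add_const 1).pow (p-1)).inv₀ (by simp)).sub hpu
    simpa using this
  have hi : Tendsto (fun n : ℕ => (p : ℝ) / (n : ℝ) ^ (1 / (p : ℝ)) + 1) atTop (𝓝 1) := by
    simpa using hpu.add_const 1
  refine tendsto_of_tendsto_of_tendsto_of_le_of_le' lo hi ?_ ?_
  · filter_upwards [eventually_gt_atTop 0] with n hn
    have hu : (0 : ℝ) < (n : ℝ) ^ (1 / (p : ℝ)) := by positivity
    have h1 := imu_ge (n := n) hp
    set u := (n : ℝ) ^ (1 / (p : ℝ)) with hudef
    have h2 : (n : ℝ) = u * u ^ (p - 1) := u_pow hp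
    rw [h2] at h1
    rw [sub_le_iff_le_add, ← add_div, ← one_div, div_le_div_iff₀ (by positivity) hu]
    have h3 : (p / u + 1 : ℝ) = (p + u) / u := by field_simp
    rw [h3, div_pow, one_mul, mul_div_assoc', le_div_iff₀ (by positivity)]
    exact h1
  · filter_upwards [eventually_gt_atTop 0] with n hn
    have hu : (0 : ℝ) < (n : ℝ) ^ (1 / (p : ℝ)) := by positivity
    rw [div_add_one hu.ne']
    gcongr
    exact imu_le (by omega)

/-- the expected number of fixed points of `σ ^ e` is `o(n)` -/
lemma fixpow_small {p e : ℕ} (hp : 2 ≤ p) (he : ¬ p ∣ e) :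
    Tendsto (fun n : ℕ => (Nat.card {q : IX p (Fin n) × Fin n // (q.1.1 ^ e) q.2 = q.2} : ℝ) / (ifc p n * n)) atTop (𝓝 0) := by
  have hpu := pu_tendsto hp
  have hi : Tendsto (fun n : ℕ => ((p : ℝ) / (n : ℝ) ^ (1 / (p : ℝ))) * ((p : ℝ) / (n : ℝ) ^ (1 / (p : ℝ)) + 1) ^ (p - 1)) atTop (𝓝 0) := by
    simpa using hpu.mul ((hpu.add_const 1).pow (p-1))
  refine tendsto_of_tendsto_of_tendsto_of_le_of_le' tendsto_const_nhds hi ?_ ?_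
  · exact Eventually.of_forall fun n => by positivity
  · filter_upwards [eventually_gt_atTop 0] with n hn
    have hu : (0 : ℝ) < (n : ℝ) ^ (1 / (p : ℝ)) := by positivity
    have hf : (0 : ℝ) < ifc p n := by exact_mod_cast ifc_pos p n
    have h1 : (Nat.card {q : IX p (Fin n) × Fin n // (q.1.1 ^ e) q.2 = q.2} : ℝ) ≤ ∑ d ∈ p.properDivisors, (Nat.card (FixTup p n d) : ℝ) := by
      exact_mod_cast fixpow_le (n := n) (show 0 < p by omega) he
    have h2 := small_le (n := n) hp
    have h3 : (Nat.card {q : IX p (Fin n) × Fin n // (q.1.1 ^ e) q.2 = q.2} : ℝ) / ifc p n ≤ p * (p + (n : ℝ) ^ (1 / (p : ℝ))) ^ (p - 1) := 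
      le_trans (by gcongr) h2
    rw [← div_div]
    have hn' : (0 : ℝ) < n := by exact_mod_cast hn
    rw [div_le_iff₀ hn']
    refine h3.trans (le_of_eq ?_)
    have h2 : (n : ℝ) = _ := u_pow (n := n) hp
    set u := (n : ℝ) ^ (1 / (p : ℝ)) with hudef
    rw [h2]
    have h3 : (p / u + 1 : ℝ) = (p + u) / u := by field_simp
    rw [h3, div_pow]
    field_simp


lemma two_pow_le_choose {n k : ℕ} (h : 2 * k ≤ n) : 2 ^ k ≤ n.choose k := by
  refine le_trans ?_ (Nat.choose_le_choose k h)
  change 2 ^ k ≤ k.centralBinom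
  clear h
  induction k with
  | zero => simp
  | succ k ih =>
    have := Nat.succ_mul_centralBinom_succ k
    have h2 : (k + 1) * 2 ^ (k + 1) ≤ (k + 1) * (k + 1).centralBinom := by
      rw [this, pow_succ]
      nlinarith
    exact Nat.le_of_mul_le_mul_left h2 (by omega)

lemma self_le_choose {n k : ℕ} (h0 : 0 < k) (h : k < n) : n ≤ n.choose k := by
  induction n generalizing k with
  | zero => omega
  | succ n ih =>
    obtain ⟨j, rfl⟩ : ∃ j, k = j + 1 := ⟨k - 1, by omega⟩
    rw [Nat.choose_succ_succ']
    have h1 : 0 < n.choose j := Nat.choose_pos (by omega)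
    rcases Nat.lt_or_ge (j + 1) n with h2 | h2
    · have := ih (by omega) h2
      omega
    · have : n = j + 1 := by omega
      subst this
      simp

lemma conv_small (F : ℕ → ℝ) (hF : ∀ n, 0 < F n) (δ : ℝ) (hδ : 0 < δ)
    (hr : Tendsto (fun n : ℕ => F n * ((n + 1 : ℕ) : ℝ) ^ (1 + δ) / F (n + 1)) atTop (𝓝 1)) :
    Tendsto (fun n : ℕ => (∑ k ∈ Finset.Icc 1 (n / 2), (n.choose k : ℝ) * F k * F (n - k)) / F n) atTop (𝓝 0) := by
  set b : ℕ → ℝ := fun n => F n / (n.factorial : ℝ) ^ (1 + δ) with hb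
  have hfac : ∀ n : ℕ, (0 : ℝ) < n.factorial := fun n => by exact_mod_cast n.factorial_pos
  have hbpos : ∀ n, 0 < b n := fun n => div_pos (hF n) (Real.rpow_pos_of_pos (hfac n) _)
  have hbr : Tendsto (fun n => b n / b (n + 1)) atTop (𝓝 1) := by
    refine hr.congr fun n => ?_
    simp only [hb]
    rw [Nat.factorial_succ, Nat.cast_mul, Real.mul_rpow (by positivity) (by positivity)]
    have := hF n
    have := hF (n+1)
    have := Real.rpow_pos_of_pos (hfac n) (1 + δ)
    have : (0 : ℝ) < ((n + 1 : ℕ) : ℝ) ^ (1 + δ) := by positivity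
    field_simp
  set q : ℝ := 2 ^ (δ / 8) with hq
  have hq1 : 1 < q := Real.one_lt_rpow (by norm_num) (by positivity)
  have hq0 : 0 < q := by linarith
  have hev : ∀ᶠ n in atTop, b n / b (n + 1) < q ∧ q⁻¹ < b n / b (n + 1) :=
    (hbr.eventually_lt_const hq1).and (hbr.eventually_const_lt (inv_lt_one_of_one_lt₀ hq1))
  obtain ⟨N, hN⟩ := eventually_atTop.1 hev
  have hup : ∀ n ≥ N, ∀ k, b n ≤ b (n + k) * q ^ k := by
    intro n hn k
    induction k with
    | zero => simp
    | succ k ih =>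
      have h1 := (hN (n + k) (by omega)).1
      rw [div_lt_iff₀ (hbpos _)] at h1
      calc b n ≤ b (n + k) * q ^ k := ih
        _ ≤ (q * b (n + k + 1)) * q ^ k := by gcongr
        _ = _ := by rw [pow_succ]; ring_nf
  have hdn : ∀ k, b (N + k) ≤ b N * q ^ k := by
    intro k
    induction k with
    | zero => simp
    | succ k ih =>
      have h1 := (hN (N + k) (by omega)).2
      rw [lt_div_iff₀ (hbpos _), inv_mul_lt_iff₀ hq0] at h1
      calc b (N + (k + 1)) ≤ q * b (N + k) := h1.le
        _ ≤ q * (b N * q ^ k) := by gcongr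
        _ = _ := by rw [pow_succ]; ring
  obtain ⟨C, hC0, hC⟩ : ∃ C : ℝ, 0 < C ∧ ∀ n, b n ≤ C * q ^ n := by
    refine ⟨∑ j ∈ Finset.range (N + 1), b j, Finset.sum_pos (fun j _ => hbpos j) (by simp), fun n => ?_⟩
    rcases Nat.lt_or_ge n N with h | h
    · calc b n ≤ ∑ j ∈ Finset.range (N + 1), b j :=
            Finset.single_le_sum (f := b) (fun j _ => (hbpos j).le) (by simp; omega)
        _ ≤ _ := le_mul_of_one_le_right (Finset.sum_nonneg fun j _ => (hbpos j).le) (one_le_pow₀ hq1.le)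
    · obtain ⟨k, rfl⟩ := Nat.exists_eq_add_of_le h
      calc b (N + k) ≤ b N * q ^ k := hdn k
        _ ≤ (∑ j ∈ Finset.range (N + 1), b j) * q ^ (N + k) := by
          gcongr
          · exact Finset.sum_nonneg fun j _ => (hbpos j).le
          · exact Finset.single_le_sum (f := b) (fun j _ => (hbpos j).le) (by simp)
          · exact hq1.le
          · omega
  set ρ : ℝ := 2 ^ (-(δ / 4)) with hρ
  have hρ1 : ρ < 1 := Real.rpow_lt_one_of_one_lt_of_neg (by norm_num) (by linarith)
  have hρ0 : 0 < ρ := by positivity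
  have hterm : ∀ n ≥ 2 * N, ∀ k ∈ Finset.Icc 1 (n / 2), (n.choose k : ℝ) * F k * F (n - k) / F n ≤
      C * (n : ℝ) ^ (-(δ / 2)) * ρ ^ k := by
    intro n hn k hk
    rw [Finset.mem_Icc] at hk
    have hkn : 2 * k ≤ n := by omega
    have hch : (n.choose k : ℝ) = n.factorial / (k.factorial * (n - k).factorial) := Nat.cast_choose ℝ (by omega)
    have hcpos : (0 : ℝ) < n.choose k := by exact_mod_cast Nat.choose_pos (by omega)
    have hFb : ∀ j, F j = b j * (j.factorial : ℝ) ^ (1 + δ) := fun j => by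
      simp only [hb]; rw [div_mul_cancel₀ _ (Real.rpow_pos_of_pos (hfac j) _).ne']
    have e1 : (n.choose k : ℝ) * F k * F (n - k) / F n = (b k * (b (n - k) / b n)) * (n.choose k : ℝ) ^ (-δ) := by
      have e2 : (n.choose k : ℝ) ^ (-δ) = (n.choose k : ℝ) * ((n.choose k : ℝ) ^ (1 + δ))⁻¹ := by
        rw [← Real.rpow_neg hcpos.le]
        nth_rewrite 2 [← Real.rpow_one (n.choose k : ℝ)]
        rw [← Real.rpow_add hcpos]
        ring_nf
      have e3 : ((n.choose k : ℝ) ^ (1 + δ))⁻¹ = (k.factorial : ℝ) ^ (1 + δ) * ((n - k).factorial : ℝ) ^ (1 + δ) / (n.factorial : ℝ) ^ (1 + δ) := by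
        rw [hch, Real.div_rpow (by positivity) (by positivity), Real.mul_rpow (by positivity) (by positivity), inv_div]
      rw [e2, e3, hFb k, hFb (n - k), hFb n]
      have := (hbpos n).ne'
      have := (Real.rpow_pos_of_pos (hfac n) (1 + δ)).ne'
      field_simp
    have e4 : b (n - k) / b n ≤ q ^ k := by
      have := hup (n - k) (by omega) k
      rw [Nat.sub_add_cancel (by omega)] at this
      rw [div_le_iff₀ (hbpos n)]; linarith
    have e5 : (n.choose k : ℝ) ^ (-δ) ≤ (n : ℝ) ^ (-(δ / 2)) * ((2 : ℝ) ^ k) ^ (-(δ / 2)) := by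
      have : -δ = -(δ / 2) + -(δ / 2) := by ring
      rw [this, Real.rpow_add hcpos]
      have hn0 : (0 : ℝ) < n := by
        have : 0 < n := by omega
        exact_mod_cast this
      refine mul_le_mul ?_ ?_ (by positivity) (by positivity)
      · refine Real.rpow_le_rpow_of_nonpos hn0 ?_ (by linarith)
        exact_mod_cast self_le_choose (by omega) (by omega)
      · refine Real.rpow_le_rpow_of_nonpos (by positivity) ?_ (by linarith)
        exact_mod_cast two_pow_le_choose hkn
    rw [e1]
    have e6 : q ^ k * q ^ k * ((2 : ℝ) ^ k) ^ (-(δ / 2)) = ρ ^ k := by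
      rw [hq, hρ]
      simp only [← Real.rpow_natCast, ← Real.rpow_mul (show (0:ℝ) ≤ 2 by norm_num)]
      rw [← Real.rpow_add (by norm_num), ← Real.rpow_add (by norm_num)]
      congr 1; ring
    calc _ ≤ (C * q ^ k * q ^ k) * ((n : ℝ) ^ (-(δ / 2)) * ((2 : ℝ) ^ k) ^ (-(δ / 2))) := by
          gcongr
          · exact (div_pos (hbpos _) (hbpos _)).le
          · exact hC k
      _ = _ := by rw [← e6]; ring
  have hlim : Tendsto (fun n : ℕ => C * (n : ℝ) ^ (-(δ / 2)) * (1 - ρ)⁻¹) atTop (𝓝 0) := by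
    have := (tendsto_rpow_neg_atTop (show 0 < δ / 2 by positivity)).comp tendsto_natCast_atTop_atTop
    simpa using (this.const_mul C).mul_const (1 - ρ)⁻¹
  refine tendsto_of_tendsto_of_tendsto_of_le_of_le' tendsto_const_nhds hlim ?_ ?_
  · refine Eventually.of_forall fun n => div_nonneg (Finset.sum_nonneg fun k _ => ?_) (hF n).le
    have := hF k
    have := hF (n - k)
    positivity
  · filter_upwards [eventually_ge_atTop (2 * N)] with n hn
    rw [Finset.sum_div]
    refine (Finset.sum_le_sum (hterm n hn)).trans ?_
    rw [← Finset.mul_sum]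
    gcongr
    rw [← tsum_geometric_of_lt_one hρ0.le hρ1]
    exact (summable_geometric_of_lt_one hρ0.le hρ1).sum_le_tsum _ (fun _ _ => by positivity)


/-- tuples of permutations with `σ_i ^ p_i = 1` -/
abbrev Tup (m : ℕ) (p : Fin m → ℕ) (α : Type) : Type :=
  {σ : Fin m → Equiv.Perm α // ∀ i, σ i ^ p i = 1}

def tupEquiv (m : ℕ) (p : Fin m → ℕ) (α : Type) : Tup m p α ≃ ∀ i, IX (p i) α :=
  { toFun := fun σ i => ⟨σ.1 i, σ.2 i⟩
    invFun := fun f => ⟨fun i => (f i).1, fun i => (f i).2⟩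
    left_inv := fun _ => rfl
    right_inv := fun _ => rfl }

lemma Tup_card (m : ℕ) (p : Fin m → ℕ) (α : Type) [Fintype α] :
    Nat.card (Tup m p α) = ∏ i, ifc (p i) (Fintype.card α) := by
  rw [Nat.card_congr (tupEquiv m p α), Nat.card_pi]
  exact Finset.prod_congr rfl fun i _ => IX_card _ _

section traj
variable {m : ℕ} {α : Type}

def traj (σ : Fin m → Equiv.Perm α) (v : α) : List (Fin m × ℕ) → α
  | [] => v
  | a :: w => (σ a.1 ^ a.2) (traj σ v w)

def tpts (σ : Fin m → Equiv.Perm α) (v : α) : List (Fin m × ℕ) → List α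
  | [] => [v]
  | a :: w => traj σ v (a :: w) :: tpts σ v w

def TGood (σ : Fin m → Equiv.Perm α) (v : α) : List (Fin m × ℕ) → Prop
  | [] => True
  | a :: w => TGood σ v w ∧ traj σ v (a :: w) ≠ traj σ v w ∧
      ∀ j, j ≠ a.1 → ∀ y ∈ tpts σ v w, ¬ (σ j).SameCycle (traj σ v (a :: w)) y

def WRed (p : Fin m → ℕ) : List (Fin m × ℕ) → Prop
  | [] => True
  | a :: w => ¬ p a.1 ∣ a.2 ∧ (∀ b ∈ w.head?, b.1 ≠ a.1) ∧ WRed p w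

lemma tpts_length (σ : Fin m → Equiv.Perm α) (v : α) (w : List (Fin m × ℕ)) :
    (tpts σ v w).length = w.length + 1 := by
  induction w with
  | nil => rfl
  | cons a w ih => simp [tpts, ih]

lemma traj_mem (σ : Fin m → Equiv.Perm α) (v : α) (w : List (Fin m × ℕ)) :
    traj σ v w ∈ tpts σ v w := by
  cases w <;> simp [tpts, traj]

lemma start_mem (σ : Fin m → Equiv.Perm α) (v : α) (w : List (Fin m × ℕ)) :
    v ∈ tpts σ v w := by
  induction w with
  | nil => simp [tpts]
  | cons a w ih => simp [tpts, ih]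

lemma good_notMem (σ : Fin m → Equiv.Perm α) (v : α) (a : Fin m × ℕ) (w : List (Fin m × ℕ))
    (ha : ∀ b ∈ w.head?, b.1 ≠ a.1) (hw : TGood σ v w) (hne : traj σ v (a :: w) ≠ traj σ v w) :
    traj σ v (a :: w) ∉ tpts σ v w := by
  cases w with
  | nil => simpa [tpts, traj] using hne
  | cons b w =>
    intro hmem
    rw [tpts, List.mem_cons] at hmem
    rcases hmem with h | h
    · exact hne h
    · refine hw.2.2 a.1 (ha b (by simp)).symm _ h ?_
      exact ⟨(a.2 : ℕ), by rw [zpow_natCast]; rfl⟩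

variable [DecidableEq α]

def cj (σ : Fin m → Equiv.Perm α) (i : Fin m) (x c : α) : Fin m → Equiv.Perm α :=
  Function.update σ i (Equiv.swap x c * σ i * (Equiv.swap x c)⁻¹)

lemma cj_cj (σ : Fin m → Equiv.Perm α) (i : Fin m) (x c : α) : cj (cj σ i x c) i x c = σ := by
  unfold cj
  simp only [Function.update_self, Function.update_idem, Equiv.swap_inv]
  have : Equiv.swap x c * (Equiv.swap x c * σ i * Equiv.swap x c) * Equiv.swap x c = σ i := by
    simp [mul_assoc, Equiv.swap_mul_self]
  rw [this, Function.update_eq_self]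

lemma cj_pow (p : Fin m → ℕ) (σ : Fin m → Equiv.Perm α) (hσ : ∀ i, σ i ^ p i = 1) (i : Fin m) (x c : α) :
    ∀ j, cj σ i x c j ^ p j = 1 := by
  intro j
  unfold cj
  by_cases h : j = i
  · subst h
    rw [Function.update_self, conj_pow, hσ]; simp
  · rw [Function.update_of_ne h, hσ]

lemma cj_pts (σ : Fin m → Equiv.Perm α) (v : α) (i : Fin m) (x c : α) (w : List (Fin m × ℕ))
    (hx : x ∉ tpts σ v w) (hc : c ∉ tpts σ v w) :
    traj (cj σ i x c) v w = traj σ v w ∧ tpts (cj σ i x c) v w = tpts σ v w := by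
  induction w with
  | nil => exact ⟨rfl, rfl⟩
  | cons b w ih =>
    rw [tpts, List.mem_cons, not_or] at hx hc
    obtain ⟨h1, h2⟩ := ih hx.2 hc.2
    have h3 : traj (cj σ i x c) v (b :: w) = traj σ v (b :: w) := by
      rw [traj, h1]
      unfold cj
      by_cases h : b.1 = i
      · rw [h, Function.update_self, conj_pow, Equiv.Perm.mul_apply, Equiv.Perm.mul_apply, Equiv.swap_inv]
        have hm := traj_mem σ v w
        have e1 : Equiv.swap x c (traj σ v w) = traj σ v w := by
          apply Equiv.swap_apply_of_ne_of_ne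
          · intro h; rw [h] at hm; exact hx.2 hm
          · intro h; rw [h] at hm; exact hc.2 hm
        rw [e1, ← h]
        exact Equiv.swap_apply_of_ne_of_ne (fun h => hx.1 h.symm) (fun h => hc.1 h.symm)
      · rw [Function.update_of_ne h]; rfl
    exact ⟨h3, by rw [tpts, tpts, h3, h2]⟩

lemma cj_traj (σ : Fin m → Equiv.Perm α) (v : α) (a : Fin m × ℕ) (c : α) (w : List (Fin m × ℕ))
    (hx : traj σ v (a :: w) ∉ tpts σ v w) (hc : c ∉ tpts σ v w) :
    traj (cj σ a.1 (traj σ v (a :: w)) c) v (a :: w) = c := by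
  have h1 := (cj_pts σ v a.1 _ c w hx hc).1
  rw [traj, h1]
  unfold cj
  rw [Function.update_self, conj_pow, Equiv.Perm.mul_apply, Equiv.Perm.mul_apply, Equiv.swap_inv]
  have hm := traj_mem σ v w
  have e1 : Equiv.swap (traj σ v (a :: w)) c (traj σ v w) = traj σ v w := by
    apply Equiv.swap_apply_of_ne_of_ne
    · intro h; rw [h] at hm; exact hx hm
    · intro h; rw [h] at hm; exact hc hm
  rw [e1]
  exact Equiv.swap_apply_left _ _

end traj

lemma master {m n : ℕ} (p : Fin m → ℕ) (a : Fin m × ℕ) (w : List (Fin m × ℕ))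
    (B : Tup m p (Fin n) × Fin n → Prop) (S : Tup m p (Fin n) × Fin n → Finset (Fin n))
    (hB : ∀ q, B q → traj q.1.1 q.2 (a :: w) ∉ tpts q.1.1 q.2 w ∧ traj q.1.1 q.2 (a :: w) ∈ S q)
    (hS : ∀ σ τ : Tup m p (Fin n), ∀ v, (∀ j, j ≠ a.1 → σ.1 j = τ.1 j) → tpts σ.1 v w = tpts τ.1 v w →
      S (σ, v) = S (τ, v)) :
    Nat.card {q // B q} * (n - (w.length + 1)) ≤ ∑ q, (S q).card := by
  classical
  have h1 : Nat.card {q // B q} * (n - (w.length + 1)) ≤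
      Nat.card (Σ q : {q // B q}, {c : Fin n // c ∉ tpts q.1.1.1 q.1.2 w}) := by
    rw [Nat.card_sigma, Nat.card_eq_fintype_card, ← smul_eq_mul, ← Finset.card_univ]
    refine Finset.card_nsmul_le_sum _ _ _ fun q _ => ?_
    rw [Nat.card_eq_fintype_card]
    have : Fintype.card {c : Fin n // c ∉ tpts q.1.1.1 q.1.2 w} = n - (tpts q.1.1.1 q.1.2 w).toFinset.card := by
      rw [Fintype.card_subtype]
      have : (Finset.univ.filter fun c => c ∉ tpts q.1.1.1 q.1.2 w) = (tpts q.1.1.1 q.1.2 w).toFinsetᶜ := by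
        ext c; simp
      rw [this, Finset.card_compl, Fintype.card_fin]
    rw [this]
    have := List.toFinset_card_le (tpts q.1.1.1 q.1.2 w)
    rw [tpts_length] at this
    omega
  have h2 : Nat.card (Σ q : Tup m p (Fin n) × Fin n, {x // x ∈ S q}) = ∑ q, (S q).card := by
    rw [Nat.card_sigma]
    exact Finset.sum_congr rfl fun q _ => by simp
  rw [← h2]
  refine h1.trans ?_
  let nxt : (Σ q : {q // B q}, {c : Fin n // c ∉ tpts q.1.1.1 q.1.2 w}) → Tup m p (Fin n) := fun z =>
    ⟨cj z.1.1.1.1 a.1 (traj z.1.1.1.1 z.1.1.2 (a :: w)) z.2.1, cj_pow p _ z.1.1.1.2 _ _ _⟩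
  refine Nat.card_le_card_of_injective (fun z => ⟨(nxt z, z.1.1.2), ⟨traj z.1.1.1.1 z.1.1.2 (a :: w), ?_⟩⟩) ?_
  · have h3 := hB _ z.1.2
    have : S (nxt z, z.1.1.2) = S z.1.1 := by
      refine hS (nxt z) z.1.1.1 z.1.1.2 ?_ ?_
      · intro j hj
        simp only [nxt, cj]
        rw [Function.update_of_ne hj]
      · exact (cj_pts _ _ _ _ _ _ h3.1 z.2.2).2
    rw [this]
    exact h3.2
  · intro z y h
    have hq : (nxt z, z.1.1.2) = (nxt y, y.1.1.2) := congrArg (fun t : (Σ q : Tup m p (Fin n) × Fin n, {x // x ∈ S q}) => t.1) h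
    have hx : traj z.1.1.1.1 z.1.1.2 (a :: w) = traj y.1.1.1.1 y.1.1.2 (a :: w) :=
      congrArg (fun t : (Σ q : Tup m p (Fin n) × Fin n, {x // x ∈ S q}) => t.2.1) h
    have hn : nxt z = nxt y := congrArg Prod.fst hq
    have hv : z.1.1.2 = y.1.1.2 := (Prod.mk.inj hq).2
    have hcz : traj (nxt z).1 z.1.1.2 (a :: w) = z.2.1 := cj_traj _ _ _ _ _ (hB _ z.1.2).1 z.2.2
    have hcy : traj (nxt y).1 y.1.1.2 (a :: w) = y.2.1 := cj_traj _ _ _ _ _ (hB _ y.1.2).1 y.2.2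
    have hc : z.2.1 = y.2.1 := by rw [← hcz, ← hcy, hn, hv]
    have hz : cj (nxt z).1 a.1 (traj z.1.1.1.1 z.1.1.2 (a :: w)) z.2.1 = z.1.1.1.1 := cj_cj _ _ _ _
    have hy : cj (nxt y).1 a.1 (traj y.1.1.1.1 y.1.1.2 (a :: w)) y.2.1 = y.1.1.1.1 := cj_cj _ _ _ _
    have hs : z.1.1.1.1 = y.1.1.1.1 := by rw [← hz, ← hy, hn, hx, hc]
    obtain ⟨⟨⟨⟨zs, hzs⟩, zv⟩, hzB⟩, ⟨zc, hzc⟩⟩ := z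
    obtain ⟨⟨⟨⟨ys, hys⟩, yv⟩, hyB⟩, ⟨yc, hyc⟩⟩ := y
    simp only at hs hv hc
    subst hs hv hc
    rfl

lemma card_or_le {β : Type*} [Finite β] (P Q R : β → Prop) (h : ∀ q, P q → Q q ∨ R q) :
    Nat.card {q // P q} ≤ Nat.card {q // Q q} + Nat.card {q // R q} := by
  classical
  have := Fintype.ofFinite β
  simp only [Nat.card_eq_fintype_card, Fintype.card_subtype]
  refine le_trans (Finset.card_le_card ?_) (Finset.card_union_le _ _)
  intro q hq
  simp only [Finset.mem_filter, Finset.mem_univ, true_and, Finset.mem_union] at hq ⊢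
  exact h q hq

lemma Tup_fix {m : ℕ} (p : Fin m → ℕ) (hp : ∀ i, 2 ≤ p i) (i : Fin m) (e : ℕ) (he : ¬ p i ∣ e) :
    Tendsto (fun n : ℕ => (Nat.card {q : Tup m p (Fin n) × Fin n // (q.1.1 i ^ e) q.2 = q.2} : ℝ) /
      (Nat.card (Tup m p (Fin n)) * n)) atTop (𝓝 0) := by
  classical
  refine (fixpow_small (hp i) he).congr fun n => ?_
  let R := ∀ j : {j // j ≠ i}, IX (p j) (Fin n)
  have hR : Nat.card R ≠ 0 := by
    have : Nonempty R := ⟨fun j => ⟨1, by simp⟩⟩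
    exact Nat.card_pos.ne'
  let E : Tup m p (Fin n) ≃ IX (p i) (Fin n) × R := (tupEquiv m p (Fin n)).trans (Equiv.piSplitAt i _)
  have hE : ∀ σ, (E σ).1.1 = σ.1 i := fun σ => rfl
  have h1 : Nat.card (Tup m p (Fin n)) = ifc (p i) n * Nat.card R := by
    rw [Nat.card_congr E, Nat.card_prod]; rfl
  have h2 : Nat.card {q : Tup m p (Fin n) × Fin n // (q.1.1 i ^ e) q.2 = q.2} =
      Nat.card {q : IX (p i) (Fin n) × Fin n // (q.1.1 ^ e) q.2 = q.2} * Nat.card R := by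
    rw [← Nat.card_prod]
    refine Nat.card_congr
      { toFun := fun q => (⟨((E q.1.1).1, q.1.2), q.2⟩, (E q.1.1).2)
        invFun := fun z => ⟨(E.symm (z.1.1.1, z.2), z.1.1.2), ?_⟩
        left_inv := ?_
        right_inv := ?_ }
    · rw [← hE]; simpa using z.1.2
    · intro q; simp
    · intro z; simp
  rw [h1, h2]
  have hR' : (Nat.card R : ℝ) ≠ 0 := by exact_mod_cast hR
  push_cast
  rw [mul_right_comm (ifc (p i) n : ℝ), mul_div_mul_right _ _ hR']

lemma bad_small {m : ℕ} (p : Fin m → ℕ) (hp : ∀ i, 2 ≤ p i) (w : List (Fin m × ℕ)) (hw : WRed p w) :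
    Tendsto (fun n : ℕ => (Nat.card {q : Tup m p (Fin n) × Fin n // ¬ TGood q.1.1 q.2 w} : ℝ) /
      (Nat.card (Tup m p (Fin n)) * n)) atTop (𝓝 0) := by
  classical
  induction w with
  | nil => simp [TGood]
  | cons b w ih =>
    obtain ⟨hb, hbw, hw⟩ := hw
    have ih := ih hw
    have hTpos : ∀ n, (0 : ℝ) < Nat.card (Tup m p (Fin n)) := by
      intro n
      have : Nonempty (Tup m p (Fin n)) := ⟨⟨fun _ => 1, by simp⟩⟩
      exact_mod_cast Nat.card_pos
    let A : ∀ n, Tup m p (Fin n) × Fin n → Prop := fun n q => TGood q.1.1 q.2 w ∧ traj q.1.1 q.2 (b :: w) = traj q.1.1 q.2 w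
    let S : ∀ n, Tup m p (Fin n) × Fin n → Finset (Fin n) := fun n q =>
      Finset.univ.filter fun x => ∃ j, j ≠ b.1 ∧ ∃ y ∈ tpts q.1.1 q.2 w, (q.1.1 j).SameCycle x y
    let B : ∀ n, Tup m p (Fin n) × Fin n → Prop := fun n q => (TGood q.1.1 q.2 w ∧ traj q.1.1 q.2 (b :: w) ≠ traj q.1.1 q.2 w) ∧
      traj q.1.1 q.2 (b :: w) ∈ S n q
    have hA : Tendsto (fun n : ℕ => (Nat.card {q // A n q} : ℝ) / (Nat.card (Tup m p (Fin n)) * n)) atTop (𝓝 0) := by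
      have hfix := Tup_fix p hp b.1 b.2 hb
      cases w with
      | nil => simpa [A, TGood, traj] using hfix
      | cons a w =>
        have hba : a.1 ≠ b.1 := hbw a (by simp)
        have hlim := hfix.const_mul 2
        rw [mul_zero] at hlim
        refine tendsto_of_tendsto_of_tendsto_of_le_of_le' tendsto_const_nhds hlim
          (Eventually.of_forall fun n => by positivity) ?_
        filter_upwards [eventually_ge_atTop (2 * (w.length + 1))] with n hn
        have hn0 : (0 : ℝ) < n := by
          have : 0 < n := by omega
          exact_mod_cast this
        have hm := master (n := n) p a w (A n) (fun q => Finset.univ.filter fun x => (q.1.1 b.1 ^ b.2) x = x) ?_ ?_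
        · have hsum : ∑ q : Tup m p (Fin n) × Fin n, (Finset.univ.filter fun x => (q.1.1 b.1 ^ b.2) x = x).card =
              n * Nat.card {q : Tup m p (Fin n) × Fin n // (q.1.1 b.1 ^ b.2) q.2 = q.2} := by
            have e : {q : Tup m p (Fin n) × Fin n // (q.1.1 b.1 ^ b.2) q.2 = q.2} ≃ Σ σ : Tup m p (Fin n), {x // (σ.1 b.1 ^ b.2) x = x} :=
              { toFun := fun q => ⟨q.1.1, ⟨q.1.2, q.2⟩⟩
                invFun := fun z => ⟨(z.1, z.2.1), z.2.2⟩
                left_inv := fun q => rfl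
                right_inv := fun z => rfl }
            rw [Nat.card_congr e, Nat.card_sigma, Fintype.sum_prod_type]
            simp only [Finset.sum_const, Finset.card_univ, Fintype.card_fin, smul_eq_mul, ← Finset.mul_sum]
            congr 1
            refine Finset.sum_congr rfl fun σ _ => ?_
            rw [Nat.card_eq_fintype_card, Fintype.card_subtype]
          rw [hsum] at hm
          have hm2 : (Nat.card {q // A n q}) * n ≤ 2 * (n * Nat.card {q : Tup m p (Fin n) × Fin n // (q.1.1 b.1 ^ b.2) q.2 = q.2}) := by
            have : n ≤ 2 * (n - (w.length + 1)) := by omega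
            calc _ ≤ (Nat.card {q // A n q}) * (2 * (n - (w.length + 1))) := Nat.mul_le_mul_left _ this
              _ = 2 * ((Nat.card {q // A n q}) * (n - (w.length + 1))) := by ring
              _ ≤ _ := Nat.mul_le_mul_left _ hm
          have hm3 : (Nat.card {q // A n q} : ℝ) * n ≤ 2 * (n * Nat.card {q : Tup m p (Fin n) × Fin n // (q.1.1 b.1 ^ b.2) q.2 = q.2}) := by
            exact_mod_cast hm2
          have hm4 : (Nat.card {q // A n q} : ℝ) ≤ 2 * Nat.card {q : Tup m p (Fin n) × Fin n // (q.1.1 b.1 ^ b.2) q.2 = q.2} := by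
            nlinarith
          rw [mul_div_assoc']
          have := hTpos n
          gcongr
        · intro q hq
          refine ⟨good_notMem _ _ _ _ hw.2.1 hq.1.1 hq.1.2.1, ?_⟩
          simp only [Finset.mem_filter, Finset.mem_univ, true_and]
          exact hq.2
        · intro σ τ v h1 h2
          simp only [h1 b.1 hba.symm]
    have hB : Tendsto (fun n : ℕ => (Nat.card {q // B n q} : ℝ) / (Nat.card (Tup m p (Fin n)) * n)) atTop (𝓝 0) := by
      set P := ∑ i, p i
      set M : ℕ := m * (P * (w.length + 1)) with hM
      have hScard : ∀ n q, (S n q).card ≤ M := by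
        intro n q
        have : S n q ⊆ (Finset.univ ×ˢ (Finset.range P ×ˢ (tpts q.1.1 q.2 w).toFinset)).image
            (fun z : Fin m × ℕ × Fin n => (q.1.1 z.1 ^ z.2.1) z.2.2) := by
          intro x hx
          simp only [S, Finset.mem_filter, Finset.mem_univ, true_and] at hx
          obtain ⟨j, -, y, hy, hxy⟩ := hx
          obtain ⟨k, hk, hk2⟩ := hxy.symm.exists_pow_eq'
          simp only [Finset.mem_image, Finset.mem_product, Finset.mem_univ, true_and, Finset.mem_range, List.mem_toFinset]
          refine ⟨(j, k, y), ⟨?_, hy⟩, hk2⟩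
          have h1 : orderOf (q.1.1 j) ≤ p j := orderOf_le_of_pow_eq_one (by have := hp j; omega) (q.1.2 j)
          have h2 : p j ≤ P := Finset.single_le_sum (f := p) (fun _ _ => Nat.zero_le _) (Finset.mem_univ j)
          show k < P
          omega
        refine (Finset.card_le_card this).trans (Finset.card_image_le.trans ?_)
        rw [Finset.card_product, Finset.card_product, Finset.card_univ, Fintype.card_fin, Finset.card_range]
        have := List.toFinset_card_le (tpts q.1.1 q.2 w)
        rw [tpts_length] at this
        rw [hM]
        gcongr
      have hlim : Tendsto (fun n : ℕ => (2 * M : ℝ) / n) atTop (𝓝 0) := tendsto_const_div_atTop_nhds_zero_nat _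
      refine tendsto_of_tendsto_of_tendsto_of_le_of_le' tendsto_const_nhds hlim
          (Eventually.of_forall fun n => by positivity) ?_
      filter_upwards [eventually_ge_atTop (2 * (w.length + 1))] with n hn
      have hn0 : (0 : ℝ) < n := by
          have : 0 < n := by omega
          exact_mod_cast this
      have hm := master (n := n) p b w (B n) (S n) ?_ ?_
      · have hsum : ∑ q : Tup m p (Fin n) × Fin n, (S n q).card ≤ Nat.card (Tup m p (Fin n)) * n * M := by
          refine (Finset.sum_le_card_nsmul _ _ _ (fun q _ => hScard n q)).trans ?_
          rw [Finset.card_univ, ← Nat.card_eq_fintype_card, Nat.card_prod, Nat.card_fin, smul_eq_mul]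
        have hm2 : (Nat.card {q // B n q}) * n ≤ 2 * (Nat.card (Tup m p (Fin n)) * n * M) := by
          have : n ≤ 2 * (n - (w.length + 1)) := by omega
          calc _ ≤ (Nat.card {q // B n q}) * (2 * (n - (w.length + 1))) := Nat.mul_le_mul_left _ this
            _ = 2 * ((Nat.card {q // B n q}) * (n - (w.length + 1))) := by ring
            _ ≤ _ := Nat.mul_le_mul_left _ (hm.trans hsum)
        have hm3 : (Nat.card {q // B n q} : ℝ) * n ≤ 2 * (Nat.card (Tup m p (Fin n)) * n * M) := by
          exact_mod_cast hm2
        have := hTpos n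
        rw [div_le_div_iff₀ (by positivity) hn0]
        linarith
      · intro q hq
        exact ⟨good_notMem _ _ _ _ hbw hq.1.1 hq.1.2, hq.2⟩
      · intro σ τ v h1 h2
        simp only [S]
        ext x
        simp only [Finset.mem_filter, Finset.mem_univ, true_and]
        rw [h2]
        refine exists_congr fun j => and_congr_right fun hj => ?_
        rw [h1 j hj]
    have hlim := ih.add (hA.add hB)
    simp only [add_zero] at hlim
    refine tendsto_of_tendsto_of_tendsto_of_le_of_le' tendsto_const_nhds hlim
          (Eventually.of_forall fun n => by positivity) (Eventually.of_forall fun n => ?_)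
    have hor := card_or_le (fun q : Tup m p (Fin n) × Fin n => ¬ TGood q.1.1 q.2 (b :: w)) (fun q => ¬ TGood q.1.1 q.2 w)
      (fun q => A n q ∨ B n q) ?_
    · have hor2 := card_or_le (fun q => A n q ∨ B n q) _ _ (fun q h => h)
      have h3 : (Nat.card {q : Tup m p (Fin n) × Fin n // ¬ TGood q.1.1 q.2 (b :: w)} : ℝ) ≤
          Nat.card {q : Tup m p (Fin n) × Fin n // ¬ TGood q.1.1 q.2 w} + (Nat.card {q // A n q} + Nat.card {q // B n q}) := by
        exact_mod_cast hor.trans (Nat.add_le_add_left hor2 _)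
      rw [← add_div, ← add_div]
      gcongr
    · intro q hq
      by_cases h1 : TGood q.1.1 q.2 w
      · right
        by_cases h2 : traj q.1.1 q.2 (b :: w) = traj q.1.1 q.2 w
        · exact Or.inl ⟨h1, h2⟩
        · refine Or.inr ⟨⟨h1, h2⟩, ?_⟩
          by_contra h3
          apply hq
          refine ⟨h1, h2, fun j hj y hy hs => h3 ?_⟩
          simp only [S, Finset.mem_filter, Finset.mem_univ, true_and]
          exact ⟨j, hj, y, hy, hs⟩
      · exact Or.inl h1

lemma good_ne {m : ℕ} (hm : 2 ≤ m) {α : Type} (σ : Fin m → Equiv.Perm α) (v : α) (w : List (Fin m × ℕ))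
    (h0 : w ≠ []) (hw : TGood σ v w) : traj σ v w ≠ v := by
  cases w with
  | nil => exact absurd rfl h0
  | cons a w =>
    have : Nontrivial (Fin m) := Fin.nontrivial_iff_two_le.2 hm
    obtain ⟨j, hj⟩ := exists_ne a.1
    intro h
    refine hw.2.2 j hj v (start_mem σ v w) ?_
    rw [h]


def IsInv {m : ℕ} {α : Type} (σ : Fin m → Equiv.Perm α) (A : Finset α) : Prop :=
  ∀ i x, σ i x ∈ A ↔ x ∈ A

def NonTrans {m n : ℕ} (σ : Fin m → Equiv.Perm (Fin n)) : Prop :=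
  ∃ A : Finset (Fin n), IsInv σ A ∧ 1 ≤ A.card ∧ A.card ≤ n / 2

noncomputable def TF {m : ℕ} (p : Fin m → ℕ) (n : ℕ) : ℕ := ∏ i, ifc (p i) n

lemma Tup_card' {m : ℕ} (p : Fin m → ℕ) (n : ℕ) : Nat.card (Tup m p (Fin n)) = TF p n := by
  rw [Tup_card, Fintype.card_fin]; rfl

lemma inv_card {m n : ℕ} (p : Fin m → ℕ) (A : Finset (Fin n)) :
    Nat.card {σ : Tup m p (Fin n) // IsInv σ.1 A} ≤ TF p A.card * TF p (n - A.card) := by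
  classical
  have h1 : TF p A.card = Nat.card (Tup m p {x // x ∈ A}) := by
    rw [Tup_card]; simp [TF]
  have h2 : TF p (n - A.card) = Nat.card (Tup m p {x // x ∉ A}) := by
    rw [Tup_card, Fintype.card_subtype_compl]; simp [TF]
  rw [h1, h2, ← Nat.card_prod]
  refine Nat.card_le_card_of_injective (fun σ =>
    (⟨fun i => (σ.1.1 i).subtypePerm (σ.2 i), fun i => ?_⟩,
     ⟨fun i => (σ.1.1 i).subtypePerm (fun x => not_congr (σ.2 i x)), fun i => ?_⟩)) ?_
  · rw [Equiv.Perm.subtypePerm_pow]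
    ext x
    simp [σ.1.2 i]
  · rw [Equiv.Perm.subtypePerm_pow]
    ext x
    simp [σ.1.2 i]
  · intro σ τ h
    simp only [Prod.mk.injEq, Subtype.mk.injEq] at h
    apply Subtype.ext
    apply Subtype.ext
    funext i
    refine Equiv.ext fun x => ?_
    by_cases hx : x ∈ A
    · have := congrArg (fun f : Equiv.Perm {x // x ∈ A} => (f ⟨x, hx⟩).1) (congrFun h.1 i)
      simpa using this
    · have := congrArg (fun f : Equiv.Perm {x // x ∉ A} => (f ⟨x, hx⟩).1) (congrFun h.2 i)
      simpa using this

lemma nontrans_card {m n : ℕ} (p : Fin m → ℕ) :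
    Nat.card {σ : Tup m p (Fin n) // NonTrans σ.1} ≤ ∑ k ∈ Finset.Icc 1 (n / 2), n.choose k * TF p k * TF p (n - k) := by
  classical
  rw [Nat.card_eq_fintype_card, Fintype.card_subtype]
  have hsub : (Finset.univ.filter fun σ : Tup m p (Fin n) => NonTrans σ.1) ⊆
      (Finset.Icc 1 (n / 2)).biUnion fun k => (Finset.powersetCard k Finset.univ).biUnion fun A =>
        Finset.univ.filter fun σ : Tup m p (Fin n) => IsInv σ.1 A := by
    intro σ hσ
    simp only [Finset.mem_filter, Finset.mem_univ, true_and] at hσ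
    obtain ⟨A, hA, h1, h2⟩ := hσ
    simp only [Finset.mem_biUnion, Finset.mem_Icc, Finset.mem_powersetCard, Finset.mem_filter, Finset.mem_univ, true_and]
    exact ⟨A.card, ⟨h1, h2⟩, A, ⟨Finset.subset_univ _, rfl⟩, hA⟩
  refine (Finset.card_le_card hsub).trans (Finset.card_biUnion_le.trans ?_)
  refine Finset.sum_le_sum fun k _ => ?_
  refine Finset.card_biUnion_le.trans ?_
  have : ∀ A ∈ Finset.powersetCard k (Finset.univ : Finset (Fin n)),
      (Finset.univ.filter fun σ : Tup m p (Fin n) => IsInv σ.1 A).card ≤ TF p k * TF p (n - k) := by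
    intro A hA
    have h := inv_card p A
    rw [Nat.card_eq_fintype_card, Fintype.card_subtype, (Finset.mem_powersetCard.1 hA).2] at h
    exact h
  refine (Finset.sum_le_card_nsmul _ _ _ this).trans ?_
  rw [Finset.card_powersetCard, Finset.card_univ, Fintype.card_fin, smul_eq_mul, mul_assoc]

lemma TF_pos {m : ℕ} (p : Fin m → ℕ) (n : ℕ) : 0 < TF p n := Finset.prod_pos fun i _ => ifc_pos _ _

lemma TF_ratio {m : ℕ} (p : Fin m → ℕ) (hp : ∀ i, 2 ≤ p i) :
    Tendsto (fun n : ℕ => (TF p n : ℝ) * ((n + 1 : ℕ) : ℝ) ^ (1 + ((m : ℝ) - 1 - ∑ i, (1 : ℝ) / (p i : ℝ))) / TF p (n + 1)) atTop (𝓝 1) := by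
  have h1 : Tendsto (fun n : ℕ => ∏ i, (imu (p i) n / (n : ℝ) ^ (1 / (p i : ℝ)))) atTop (𝓝 (∏ i : Fin m, 1)) :=
    tendsto_finsetProd _ fun i _ => imu_tendsto (hp i)
  rw [Finset.prod_const_one] at h1
  refine ((tendsto_add_atTop_iff_nat 1).2 h1).congr fun n => ?_
  have hn : (0 : ℝ) < ((n + 1 : ℕ) : ℝ) := by positivity
  have e : 1 + ((m : ℝ) - 1 - ∑ i, (1 : ℝ) / (p i : ℝ)) = (m : ℝ) - ∑ i, (1 : ℝ) / (p i : ℝ) := by ring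
  rw [e, Real.rpow_sub hn, Real.rpow_natCast, Real.rpow_sum_of_pos hn]
  simp only [imu, Nat.add_sub_cancel, TF]
  push_cast
  simp only [Finset.prod_div_distrib, Finset.prod_mul_distrib, Finset.prod_const, Finset.card_univ, Fintype.card_fin]
  ring

lemma nontrans_small {m : ℕ} (p : Fin m → ℕ) (hp : ∀ i, 2 ≤ p i)
    (h : ∑ i, (1 : ℝ) / (p i : ℝ) < (m : ℝ) - 1) :
    ∀ᶠ n : ℕ in atTop, (TF p n : ℝ) ≤ 2 * Nat.card {σ : Tup m p (Fin n) // ¬ NonTrans σ.1} := by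
  have h1 := conv_small (fun n => (TF p n : ℝ)) (fun n => by exact_mod_cast TF_pos p n) _ (sub_pos.2 h) (TF_ratio p hp)
  filter_upwards [h1.eventually_lt_const (show (0 : ℝ) < 1 / 2 by norm_num)] with n hn
  have hT : (0 : ℝ) < TF p n := by exact_mod_cast TF_pos p n
  rw [div_lt_iff₀ hT] at hn
  have h2 : (Nat.card {σ : Tup m p (Fin n) // NonTrans σ.1} : ℝ) ≤ ∑ k ∈ Finset.Icc 1 (n / 2), (n.choose k : ℝ) * TF p k * TF p (n - k) := by
    exact_mod_cast nontrans_card p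
  have h3 : TF p n ≤ Nat.card {σ : Tup m p (Fin n) // NonTrans σ.1} + Nat.card {σ : Tup m p (Fin n) // ¬ NonTrans σ.1} := by
    rw [← Tup_card', ← Nat.card_congr (Equiv.subtypeUnivEquiv (p := fun _ : Tup m p (Fin n) => True) (fun _ => trivial))]
    exact card_or_le _ _ _ fun σ _ => em _
  have h4 : (TF p n : ℝ) ≤ Nat.card {σ : Tup m p (Fin n) // NonTrans σ.1} + Nat.card {σ : Tup m p (Fin n) // ¬ NonTrans σ.1} := by
    exact_mod_cast h3
  linarith

section group
variable {m : ℕ} {p : Fin m → ℕ}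

lemma of_pow (i : Fin m) : (PresentedGroup.of i : CyclicFreeProduct m p) ^ p i = 1 := by
  have : ((PresentedGroup.mk (cyclicRels m p)) (FreeGroup.of i ^ p i)) = 1 :=
    PresentedGroup.one_of_mem ⟨i, rfl⟩
  rw [map_pow] at this
  exact this

def homOf {n : ℕ} (σ : Tup m p (Fin n)) : CyclicFreeProduct m p →* Equiv.Perm (Fin n) :=
  PresentedGroup.toGroup (f := σ.1) (by
    rintro r ⟨i, rfl⟩
    rw [map_pow, FreeGroup.lift_apply_of]
    exact σ.2 i)

lemma homOf_of {n : ℕ} (σ : Tup m p (Fin n)) (i : Fin m) : homOf σ (PresentedGroup.of i) = σ.1 i :=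
  PresentedGroup.toGroup.of _

variable (p) in
def wordOf : List (Fin m × ℕ) → CyclicFreeProduct m p
  | [] => 1
  | a :: w => PresentedGroup.of a.1 ^ a.2 * wordOf w

lemma homOf_word {n : ℕ} (σ : Tup m p (Fin n)) (v : Fin n) (w : List (Fin m × ℕ)) :
    homOf σ (wordOf p w) v = traj σ.1 v w := by
  induction w with
  | nil => simp [wordOf, traj]
  | cons a w ih => rw [wordOf, map_mul, map_pow, homOf_of, Equiv.Perm.mul_apply, ih, traj]

lemma word_step (i : Fin m) (e : ℕ) (w : List (Fin m × ℕ)) (hw : WRed p w) :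
    ∃ w', WRed p w' ∧ wordOf p w' = PresentedGroup.of i ^ e * wordOf p w := by
  by_cases he : p i ∣ e
  · obtain ⟨k, rfl⟩ := he
    exact ⟨w, hw, by rw [pow_mul, of_pow, one_pow, one_mul]⟩
  · cases w with
    | nil => exact ⟨[(i, e)], ⟨he, by simp, trivial⟩, rfl⟩
    | cons b w =>
      by_cases hb : b.1 = i
      · subst hb
        by_cases h2 : p b.1 ∣ e + b.2
        · refine ⟨w, hw.2.2, ?_⟩
          rw [wordOf, ← mul_assoc, ← pow_add]
          obtain ⟨k, hk⟩ := h2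
          rw [hk, pow_mul, of_pow, one_pow, one_mul]
        · refine ⟨(b.1, e + b.2) :: w, ⟨h2, hw.2.1, hw.2.2⟩, ?_⟩
          rw [wordOf, wordOf, ← mul_assoc, ← pow_add]
      · refine ⟨(i, e) :: b :: w, ⟨he, ?_, hw⟩, rfl⟩
        intro c hc
        simp only [List.head?_cons, Option.mem_def, Option.some.injEq] at hc
        subst hc
        exact hb

lemma exists_word (hp : ∀ i, 2 ≤ p i) (g : CyclicFreeProduct m p) : ∃ w, WRed p w ∧ wordOf p w = g := by
  have key : ∀ g : CyclicFreeProduct m p, ∀ w, WRed p w → ∃ w', WRed p w' ∧ wordOf p w' = g * wordOf p w := by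
    intro g
    obtain ⟨x, rfl⟩ := PresentedGroup.mk_surjective (cyclicRels m p) g
    induction x using FreeGroup.induction_on with
    | C1 => intro w hw; exact ⟨w, hw, by simp⟩
    | of i =>
      intro w hw
      obtain ⟨w', h1, h2⟩ := word_step i 1 w hw
      exact ⟨w', h1, by rw [h2, pow_one]; rfl⟩
    | inv_of i _ =>
      intro w hw
      obtain ⟨w', h1, h2⟩ := word_step i (p i - 1) w hw
      refine ⟨w', h1, ?_⟩
      rw [h2, map_inv]
      congr 1
      rw [eq_inv_iff_mul_eq_one]
      change (PresentedGroup.of i : CyclicFreeProduct m p) ^ (p i - 1) * PresentedGroup.of i = 1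
      rw [← pow_succ, Nat.sub_add_cancel (by have := hp i; omega), of_pow]
    | mul x y hx hy =>
      intro w hw
      obtain ⟨w1, h1, h2⟩ := hy w hw
      obtain ⟨w2, h3, h4⟩ := hx w1 h1
      exact ⟨w2, h3, by rw [h4, h2, map_mul, mul_assoc]⟩
  obtain ⟨w, h1, h2⟩ := key g [] trivial
  exact ⟨w, h1, by rw [h2, wordOf, mul_one]⟩

lemma fix_small (hp : ∀ i, 2 ≤ p i) (hm : 2 ≤ m) (g : CyclicFreeProduct m p) (hg : g ≠ 1) :
    Tendsto (fun n : ℕ => (Nat.card {q : Tup m p (Fin n) × Fin n // homOf q.1 g q.2 = q.2} : ℝ) /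
      (TF p n * n)) atTop (𝓝 0) := by
  obtain ⟨w, hw, rfl⟩ := exists_word hp g
  have h0 : w ≠ [] := by
    rintro rfl
    exact hg rfl
  have hb := bad_small p hp w hw
  refine tendsto_of_tendsto_of_tendsto_of_le_of_le' tendsto_const_nhds hb
          (Eventually.of_forall fun n => by positivity) (Eventually.of_forall fun n => ?_)
  simp only [Tup_card']
  gcongr
  refine Nat.card_le_card_of_injective (fun q => ⟨q.1, fun h => ?_⟩) ?_
  · exact good_ne hm _ _ _ h0 h (by rw [← homOf_word]; exact q.2)
  · intro q r h
    simp only [Subtype.mk.injEq] at h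
    exact Subtype.ext h

/-- subgroups of index `n` with a labelling of the cosets -/
abbrev LabSub (m : ℕ) (p : Fin m → ℕ) (n : ℕ) : Type :=
  Σ H : {H : Subgroup (CyclicFreeProduct m p) // H.index = n}, (CyclicFreeProduct m p ⧸ H.1 ≃ Fin n)

def labHom {n : ℕ} (z : LabSub m p n) : CyclicFreeProduct m p →* Equiv.Perm (Fin n) :=
  (Equiv.permCongrHom z.2).toMonoidHom.comp (MulAction.toPermHom (CyclicFreeProduct m p) (CyclicFreeProduct m p ⧸ z.1.1))

lemma labHom_apply {n : ℕ} (z : LabSub m p n) (g : CyclicFreeProduct m p) (x : CyclicFreeProduct m p ⧸ z.1.1) :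
    labHom z g (z.2 x) = z.2 (g • x) := by
  simp [labHom, Equiv.permCongrHom]

def labTup {n : ℕ} (z : LabSub m p n) : Tup m p (Fin n) :=
  ⟨fun i => labHom z (PresentedGroup.of i), fun i => by rw [← map_pow, of_pow, map_one]⟩

lemma homOf_labTup {n : ℕ} (z : LabSub m p n) : homOf (labTup z) = labHom z := by
  apply PresentedGroup.ext
  intro i
  rw [homOf_of]; rfl

def labPt {n : ℕ} (z : LabSub m p n) : Fin n := z.2 ((1 : CyclicFreeProduct m p) : CyclicFreeProduct m p ⧸ z.1.1)

lemma lab_inj {n : ℕ} : Function.Injective (fun z : LabSub m p n => (labTup z, labPt z)) := by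
  intro z y h
  simp only [Prod.mk.injEq] at h
  obtain ⟨h1, h2⟩ := h
  have h3 : labHom z = labHom y := by rw [← homOf_labTup, ← homOf_labTup, h1]
  have key : ∀ (z : LabSub m p n) (g : CyclicFreeProduct m p), labHom z g (labPt z) = z.2 (g : CyclicFreeProduct m p ⧸ z.1.1) := by
    intro z g
    rw [labPt, labHom_apply]
    congr 1
    rw [MulAction.Quotient.smul_coe, smul_eq_mul, mul_one]
  have hmem : ∀ (z : LabSub m p n) (g : CyclicFreeProduct m p), g ∈ z.1.1 ↔ labHom z g (labPt z) = labPt z := by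
    intro z g
    rw [key, labPt, z.2.injective.eq_iff]
    rw [eq_comm, QuotientGroup.eq]; simp
  have hH : z.1.1 = y.1.1 := by
    ext g
    rw [hmem, hmem, h3, h2]
  obtain ⟨⟨H, hi⟩, e⟩ := z
  obtain ⟨⟨K, hi'⟩, f⟩ := y
  simp only at hH
  subst hH
  have : e = f := by
    refine Equiv.ext fun x => ?_
    induction x using QuotientGroup.induction_on with
    | H g =>
      have a1 := key ⟨⟨H, hi⟩, e⟩ g
      have a2 := key ⟨⟨H, hi⟩, f⟩ g
      simp only at a1 a2
      rw [← a1, ← a2, h3, h2]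
  rw [this]

lemma lab_surj {n : ℕ} (σ : Tup m p (Fin n)) (hσ : ¬ NonTrans σ.1) (v : Fin n) :
    ∃ z : LabSub m p n, (labTup z, labPt z) = (σ, v) := by
  classical
  have htr : ∀ y, ∃ g, homOf σ g v = y := by
    let O : Finset (Fin n) := Finset.univ.filter fun y => ∃ g, homOf σ g v = y
    have hO : IsInv σ.1 O := by
      intro i x
      simp only [O, Finset.mem_filter, Finset.mem_univ, true_and]
      constructor
      · rintro ⟨g, hg⟩
        refine ⟨(PresentedGroup.of i)⁻¹ * g, ?_⟩
        rw [map_mul, Equiv.Perm.mul_apply, hg, map_inv, homOf_of]; simp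
      · rintro ⟨g, hg⟩
        refine ⟨PresentedGroup.of i * g, ?_⟩
        rw [map_mul, Equiv.Perm.mul_apply, hg, homOf_of]
    have hOc : IsInv σ.1 Oᶜ := by
      intro i x
      rw [Finset.mem_compl, Finset.mem_compl, hO]
    have hv : v ∈ O := by
      simp only [O, Finset.mem_filter, Finset.mem_univ, true_and]
      exact ⟨1, by simp⟩
    by_contra hcon
    push Not at hcon
    obtain ⟨y, hy⟩ := hcon
    have hyO : y ∈ Oᶜ := by simpa [O] using hy
    have c1 : 0 < O.card := Finset.card_pos.2 ⟨v, hv⟩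
    have c2 : 0 < Oᶜ.card := Finset.card_pos.2 ⟨y, hyO⟩
    have c3 : O.card + Oᶜ.card = n := by rw [Finset.card_add_card_compl, Fintype.card_fin]
    apply hσ
    rcases Nat.le_total O.card Oᶜ.card with h | h
    · exact ⟨O, hO, c1, by omega⟩
    · exact ⟨Oᶜ, hOc, c2, by omega⟩
  letI : MulAction (CyclicFreeProduct m p) (Fin n) := MulAction.compHom (Fin n) (homOf σ)
  have hsm : ∀ (g : CyclicFreeProduct m p) (x : Fin n), g • x = homOf σ g x := fun _ _ => rfl
  let H := MulAction.stabilizer (CyclicFreeProduct m p) v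
  have hbij : Function.Bijective (MulAction.ofQuotientStabilizer (CyclicFreeProduct m p) v) := by
    refine ⟨MulAction.injective_ofQuotientStabilizer _ _, fun y => ?_⟩
    obtain ⟨g, hg⟩ := htr y
    exact ⟨(g : CyclicFreeProduct m p ⧸ H), by rw [MulAction.ofQuotientStabilizer_mk, hsm, hg]⟩
  let e : CyclicFreeProduct m p ⧸ H ≃ Fin n := Equiv.ofBijective _ hbij
  have hidx : H.index = n := by
    rw [Subgroup.index, Nat.card_congr e, Nat.card_fin]
  have he : ∀ g : CyclicFreeProduct m p, e (g : CyclicFreeProduct m p ⧸ H) = homOf σ g v := fun g => rfl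
  let z : LabSub m p n := ⟨⟨H, hidx⟩, e⟩
  refine ⟨z, Prod.ext (Subtype.ext (funext fun i => Equiv.ext fun x => ?_)) ?_⟩
  · obtain ⟨g, rfl⟩ := htr x
    have h1 : labHom z (PresentedGroup.of i) (e g) = e ((PresentedGroup.of i : CyclicFreeProduct m p) • (g : CyclicFreeProduct m p ⧸ H)) :=
      labHom_apply z _ _
    rw [MulAction.Quotient.smul_coe, he, he, smul_eq_mul, map_mul, homOf_of] at h1
    exact h1
  · change e ((1 : CyclicFreeProduct m p) : CyclicFreeProduct m p ⧸ H) = v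
    rw [he]; simp

lemma index_equiv {n : ℕ} (hn : 0 < n) (H : Subgroup (CyclicFreeProduct m p)) (hH : H.index = n) :
    Nonempty (CyclicFreeProduct m p ⧸ H ≃ Fin n) := by
  have h1 : Nat.card (CyclicFreeProduct m p ⧸ H) = n := hH
  have : Finite (CyclicFreeProduct m p ⧸ H) := Nat.finite_of_card_ne_zero (by omega)
  exact ⟨Finite.equivFinOfCardEq h1⟩

instance labFinite (n : ℕ) : Finite (LabSub m p n) := Finite.of_injective _ lab_inj

lemma sub_finite {n : ℕ} (hn : 0 < n) : Finite {H : Subgroup (CyclicFreeProduct m p) // H.index = n} := by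
  refine Finite.of_surjective (fun z : LabSub m p n => z.1) fun H => ?_
  obtain ⟨e⟩ := index_equiv hn H.1 H.2
  exact ⟨⟨H, e⟩, rfl⟩

lemma equiv_card {n : ℕ} (hn : 0 < n) (H : Subgroup (CyclicFreeProduct m p)) (hH : H.index = n) :
    Nat.card (CyclicFreeProduct m p ⧸ H ≃ Fin n) = n.factorial := by
  obtain ⟨e⟩ := index_equiv hn H hH
  rw [Nat.card_congr (Equiv.equivCongr e (Equiv.refl _)), Nat.card_perm, Nat.card_fin]

lemma lower_count {n : ℕ} (hn : 0 < n) : Nat.card {σ : Tup m p (Fin n) // ¬ NonTrans σ.1} * n ≤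
    Nat.card {H : Subgroup (CyclicFreeProduct m p) // H.index = n} * n.factorial := by
  have hfin := sub_finite (p := p) hn
  have := Fintype.ofFinite {H : Subgroup (CyclicFreeProduct m p) // H.index = n}
  have hf : ∀ H : {H : Subgroup (CyclicFreeProduct m p) // H.index = n}, Finite (CyclicFreeProduct m p ⧸ H.1 ≃ Fin n) := fun H =>
    Nat.finite_of_card_ne_zero (by rw [equiv_card hn H.1 H.2]; exact n.factorial_ne_zero)
  have h1 : Nat.card (LabSub m p n) = Nat.card {H : Subgroup (CyclicFreeProduct m p) // H.index = n} * n.factorial := by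
    rw [Nat.card_sigma]
    simp only [fun H : {H : Subgroup (CyclicFreeProduct m p) // H.index = n} => equiv_card hn H.1 H.2]
    rw [Finset.sum_const, Finset.card_univ, ← Nat.card_eq_fintype_card, smul_eq_mul]
  rw [← h1]
  have h2 : Nat.card {σ : Tup m p (Fin n) // ¬ NonTrans σ.1} * n = Nat.card ({σ : Tup m p (Fin n) // ¬ NonTrans σ.1} × Fin n) := by
    rw [Nat.card_prod, Nat.card_fin]
  rw [h2]
  choose s hs using fun q : {σ : Tup m p (Fin n) // ¬ NonTrans σ.1} × Fin n => lab_surj q.1.1 q.1.2 q.2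
  refine Nat.card_le_card_of_injective s fun q r h => ?_
  have h3 : (q.1.1, q.2) = (r.1.1, r.2) := by rw [← hs q, ← hs r, h]
  rw [Prod.mk.injEq] at h3
  exact Prod.ext (Subtype.ext h3.1) h3.2

lemma upper_count {n : ℕ} (hn : 0 < n) (g : CyclicFreeProduct m p)
    [Fintype {H : Subgroup (CyclicFreeProduct m p) // H.index = n}] :
    (∑ H : {H : Subgroup (CyclicFreeProduct m p) // H.index = n}, fixedCosetCount g H.1) * n.factorial ≤
      Nat.card {q : Tup m p (Fin n) × Fin n // homOf q.1 g q.2 = q.2} * n := by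
  have hf : ∀ H : {H : Subgroup (CyclicFreeProduct m p) // H.index = n}, Finite (CyclicFreeProduct m p ⧸ H.1 ≃ Fin n) := fun H =>
    Nat.finite_of_card_ne_zero (by rw [equiv_card hn H.1 H.2]; exact n.factorial_ne_zero)
  have hf2 : ∀ H : {H : Subgroup (CyclicFreeProduct m p) // H.index = n}, Finite (CyclicFreeProduct m p ⧸ H.1) := fun H => by
    obtain ⟨e⟩ := index_equiv hn H.1 H.2
    exact Finite.of_equiv _ e.symm
  have h1 : (∑ H : {H : Subgroup (CyclicFreeProduct m p) // H.index = n}, fixedCosetCount g H.1) * n.factorial =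
      Nat.card (Σ H : {H : Subgroup (CyclicFreeProduct m p) // H.index = n},
        {x : CyclicFreeProduct m p ⧸ H.1 // g • x = x} × (CyclicFreeProduct m p ⧸ H.1 ≃ Fin n)) := by
    rw [Nat.card_sigma, Finset.sum_mul]
    refine Finset.sum_congr rfl fun H _ => ?_
    rw [Nat.card_prod, equiv_card hn H.1 H.2]; rfl
  have h2 : Nat.card {q : Tup m p (Fin n) × Fin n // homOf q.1 g q.2 = q.2} * n =
      Nat.card ({q : Tup m p (Fin n) × Fin n // homOf q.1 g q.2 = q.2} × Fin n) := by
    rw [Nat.card_prod, Nat.card_fin]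
  rw [h1, h2]
  refine Nat.card_le_card_of_injective (fun y => (⟨(labTup ⟨y.1, y.2.2⟩, y.2.2 y.2.1.1), ?_⟩, labPt ⟨y.1, y.2.2⟩)) ?_
  · rw [homOf_labTup]
    have := labHom_apply ⟨y.1, y.2.2⟩ g y.2.1.1
    rw [y.2.1.2] at this
    exact this
  · intro y z h
    simp only [Prod.mk.injEq, Subtype.mk.injEq] at h
    obtain ⟨⟨ha, hb⟩, hc⟩ := h
    have := lab_inj (Prod.ext ha hc)
    obtain ⟨H, ⟨x, hx⟩, e⟩ := y
    obtain ⟨K, ⟨x', hx'⟩, e'⟩ := z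
    simp only [Sigma.mk.injEq] at this
    obtain ⟨rfl, h2⟩ := this
    have h2 := eq_of_heq h2
    subst h2
    have h3 : x = x' := e.injective hb
    subst h3
    rfl

end group

theorem irs_limit_cyclicFreeProduct (m : ℕ) (p : Fin m → ℕ) (hp : ∀ i, 2 ≤ p i)
    (h : ∑ i, (1 : ℝ) / (p i : ℝ) < (m : ℝ) - 1)
    (g : CyclicFreeProduct m p) (hg : g ≠ 1) :
    (fun n : ℕ => subgroupExp (CyclicFreeProduct m p) n
        (fun H => (fixedCosetCount g H : ℝ))) =o[Filter.atTop] (fun n : ℕ => (n : ℝ)) := by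
  have hm : 2 ≤ m := by
    have h1 : (0 : ℝ) ≤ ∑ i, (1 : ℝ) / (p i : ℝ) := Finset.sum_nonneg fun i _ => by positivity
    have h2 : (1 : ℝ) < m := by linarith
    have h3 : 1 < m := by exact_mod_cast h2
    omega
  have hfix := (fix_small hp hm g hg).const_mul 2
  rw [mul_zero] at hfix
  rw [isLittleO_iff_tendsto' (by
    filter_upwards [eventually_gt_atTop 0] with n hn h0
    exact absurd h0 (by exact_mod_cast hn.ne'))]
  refine tendsto_of_tendsto_of_tendsto_of_le_of_le' tendsto_const_nhds hfix ?_ ?_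
  · refine Eventually.of_forall fun n => ?_
    unfold subgroupExp
    have : 0 ≤ ∑' H : {H : Subgroup (CyclicFreeProduct m p) // H.index = n}, (fixedCosetCount g H.1 : ℝ) :=
      tsum_nonneg fun _ => by positivity
    positivity
  · filter_upwards [nontrans_small p hp h, eventually_gt_atTop 0] with n hn hn0
    have hfin := sub_finite (p := p) hn0
    have := Fintype.ofFinite {H : Subgroup (CyclicFreeProduct m p) // H.index = n}
    unfold subgroupExp
    rw [tsum_fintype]
    have hU : (∑ H : {H : Subgroup (CyclicFreeProduct m p) // H.index = n}, (fixedCosetCount g H.1 : ℝ)) * n.factorial ≤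
      Nat.card {q : Tup m p (Fin n) × Fin n // homOf q.1 g q.2 = q.2} * n := by
      exact_mod_cast upper_count hn0 g
    have hL : (Nat.card {σ : Tup m p (Fin n) // ¬ NonTrans σ.1} : ℝ) * n ≤
      Nat.card {H : Subgroup (CyclicFreeProduct m p) // H.index = n} * n.factorial := by
      exact_mod_cast lower_count hn0
    have hT : (0 : ℝ) < TF p n := by exact_mod_cast TF_pos p n
    have hn' : (0 : ℝ) < n := by exact_mod_cast hn0
    have hfac : (0 : ℝ) < n.factorial := by exact_mod_cast n.factorial_pos
    set s : ℝ := ∑ H : {H : Subgroup (CyclicFreeProduct m p) // H.index = n}, (fixedCosetCount g H.1 : ℝ)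
    set a : ℝ := (Nat.card {H : Subgroup (CyclicFreeProduct m p) // H.index = n} : ℝ)
    set t : ℝ := (Nat.card {σ : Tup m p (Fin n) // ¬ NonTrans σ.1} : ℝ)
    set N : ℝ := (Nat.card {q : Tup m p (Fin n) × Fin n // homOf q.1 g q.2 = q.2} : ℝ)
    have hN : 0 ≤ N := Nat.cast_nonneg _
    have ht : 0 < t := by linarith
    have ha : 0 < a := by
      have : 0 < a * n.factorial := lt_of_lt_of_le (by positivity) hL
      exact pos_of_mul_pos_left this hfac.le
    have e1 : s / a ≤ N / t := by
      have : s / a = (s * n.factorial) / (a * n.factorial) := by rw [mul_div_mul_right _ _ hfac.ne']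
      rw [this, ← mul_div_mul_right N t hn'.ne']
      gcongr
    have e2 : N / t ≤ 2 * N / TF p n := by
      rw [div_le_div_iff₀ ht hT]
      nlinarith
    calc s / a / n ≤ 2 * N / TF p n / n :=
        div_le_div_of_nonneg_right (e1.trans e2) hn'.le
      _ = 2 * (N / (TF p n * n)) := by rw [div_div, mul_div_assoc]
end
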